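/- For every pair of integers ℓ, m ≥ 0 there exists a constant C_{ℓ,m} such that for all R ≥ 1 and all ρ ∈ [1,R], the first eigenfunction v_R satisfies ‖∂₁^ℓ ∂₂^m v_R‖_{L²(Σ_ρ¹)} ≤ C_{ℓ,m} e^{-ρω} and ‖∂₂^ℓ ∂₁^m v_R‖_{L²(Σ_ρ²)} ≤ C_{ℓ,m} e^{-ρω}, where Σ_ρ¹={ρ}×I, Σ_ρ²=I×{ρ}, and the constants are independent of R and ρ. -/

import Mathlib

/-!
On the horizontal arm `(0, R) × (-1, 0)` the eigenfunction vanishes on the two long sides, so its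
cross-sections expand in sine series. With `λ = λ₁(Γ_R)`, the coefficients
`aₖ(x) = ∫ v(x, t) sin(kπt) dt` satisfy `aₖ'' = ((kπ)² - λ) aₖ` and `aₖ'(R) = 0`, whence
`aₖ(x) = aₖ(R) cosh(√((kπ)² - λ) (R - x))`. As `v` is only continuous up to the long sides, the
equation is first derived, up to a small error, for cross-sections contracted towards the middle of
the arm. The mass of `v` being at most `1` bounds `aₖ` somewhere in `(0, 1/2)`, and the explicit
form turns this into decay at rate `√(π² - λ)` in `x` for `x ≥ 3/4`, with a further factor
exponentially small in `k` that lets the sine series be differentiated term by term. For `λ > π²`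
the first mode is a cosine; it is controlled because `v > 0` confines it to a quarter period.

It remains to compare `√(π² - λ₁(Γ_R))` with `ω`. By the Poincaré inequality on cross-sections a
test function on `Γ` has Rayleigh quotient at least `π²` on `Γ ∖ Γ_R`, so
`min(λ₁(Γ_R), π²) ≤ λ₁(Γ)`. The second estimate is the first one for the reflection of `v` in the
diagonal.
-/

noncomputable section
open MeasureTheory Set Real

/-- The interval `I = (-1,0)`. -/
def II : Set ℝ := Set.Ioo (-1) 0

/-- The broken guide `Γ = {x ∈ ℝ² : -1 < min(x₁,x₂) < 0}`. -/
def Gam : Set (ℝ × ℝ) := {p | -1 < min p.1 p.2 ∧ min p.1 p.2 < 0}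

/-- The box `□_L = {x : max(|x₁+1|,|x₂+1|) < L}`. -/
def Box (L : ℝ) : Set (ℝ × ℝ) := {p | |p.1 + 1| < L ∧ |p.2 + 1| < L}

/-- The finite guide `Γ_R = Γ ∩ □_{R+1}`. -/
def GamR (R : ℝ) : Set (ℝ × ℝ) := Gam ∩ Box (R + 1)

/-- The Neumann part `Σ_R = ∂Γ_R ∩ ∂□_{R+1}` of the boundary. -/
def Sig (R : ℝ) : Set (ℝ × ℝ) := frontier (GamR R) ∩ frontier (Box (R + 1))

/-- The Dirichlet part `∂Γ_R ∖ Σ_R` of the boundary. -/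
def DirB (R : ℝ) : Set (ℝ × ℝ) := frontier (GamR R) \ Sig R

/-- Squared gradient `|∇u|² = (∂₁u)² + (∂₂u)²`. -/
def gradSq2 (u : ℝ × ℝ → ℝ) (p : ℝ × ℝ) : ℝ :=
  (fderiv ℝ u p (1, 0)) ^ 2 + (fderiv ℝ u p (0, 1)) ^ 2

/-- Admissible functions for the mixed problem on `Γ_R`: `C¹` up to the boundary
(modelled by a globally `C¹` extension) vanishing on the Dirichlet part. -/
def AdmR (R : ℝ) (u : ℝ × ℝ → ℝ) : Prop :=
  ContDiff ℝ 1 u ∧ ∀ p ∈ DirB R, u p = 0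

/-- First Rayleigh quotient `λ₁(Γ_R)` of the mixed Dirichlet–Neumann Laplacian on `Γ_R`. -/
def lamR (R : ℝ) : ℝ :=
  sInf {r | ∃ u : ℝ × ℝ → ℝ, AdmR R u ∧ (∫ p in GamR R, (u p) ^ 2) ≠ 0 ∧
    r = (∫ p in GamR R, gradSq2 u p) / ∫ p in GamR R, (u p) ^ 2}

/-- First Rayleigh quotient `λ₁(Γ)` of the Dirichlet Laplacian on the broken guide `Γ`. -/
def lamG : ℝ :=
  sInf {r | ∃ u : ℝ × ℝ → ℝ, ContDiff ℝ 1 u ∧ HasCompactSupport u ∧ tsupport u ⊆ Gam ∧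
    (∫ p in Gam, (u p) ^ 2) ≠ 0 ∧
    r = (∫ p in Gam, gradSq2 u p) / ∫ p in Gam, (u p) ^ 2}

/-- `ω = √(π² − λ₁(Γ))`. -/
def omega : ℝ := Real.sqrt (π ^ 2 - lamG)

/-- Partial derivative `∂₁`. -/
def pd1 (u : ℝ × ℝ → ℝ) : ℝ × ℝ → ℝ := fun p => fderiv ℝ u p (1, 0)

/-- Partial derivative `∂₂`. -/
def pd2 (u : ℝ × ℝ → ℝ) : ℝ × ℝ → ℝ := fun p => fderiv ℝ u p (0, 1)

/-- Laplacian `Δ = ∂₁² + ∂₂²`. -/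
def lap2 (u : ℝ × ℝ → ℝ) (p : ℝ × ℝ) : ℝ := pd1 (pd1 u) p + pd2 (pd2 u) p

/-- The open segments `Σ_R¹ = {R} × I` and `Σ_R² = I × {R}` (for `R ≥ 0`). -/
def SigSeg (R : ℝ) : Set (ℝ × ℝ) := ({R} ×ˢ II) ∪ (II ×ˢ {R})

/-- `v` is the positive normalized first eigenfunction of the mixed Dirichlet–Neumann
Laplacian on `Γ_R`: smooth in `Γ_R` and up to the Neumann boundary, continuous up to the
closure, vanishing on the Dirichlet part, with vanishing normal derivative on `Σ_R`,
satisfying `-Δv = λ₁(Γ_R) v` in `Γ_R`, positive, and `L²`-normalized. -/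
def IsFirstEF (R : ℝ) (v : ℝ × ℝ → ℝ) : Prop :=
  (∃ U : Set (ℝ × ℝ), IsOpen U ∧ GamR R ∪ SigSeg R ⊆ U ∧ ContDiffOn ℝ (⊤ : ℕ∞) v U) ∧
  ContinuousOn v (closure (GamR R)) ∧
  (∀ p ∈ DirB R, v p = 0) ∧
  (∀ t ∈ II, pd1 v (R, t) = 0) ∧
  (∀ t ∈ II, pd2 v (t, R) = 0) ∧
  (∀ p ∈ GamR R, -(lap2 v p) = lamR R * v p) ∧
  (∀ p ∈ GamR R, 0 < v p) ∧
  (∫ p in GamR R, (v p) ^ 2) = 1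

open Filter Topology
open scoped ContDiff

/-! ### Directional derivatives -/

section DirDeriv

variable {E F : Type*} [NormedAddCommGroup E] [NormedSpace ℝ E] [NormedAddCommGroup F]
  [NormedSpace ℝ F]

/-- The derivative of `u` in the direction `e`; `pd1` and `pd2` are, definitionally, the cases
`e = (1, 0)` and `e = (0, 1)`. -/
def dirDeriv (e : E) (u : E → F) : E → F := fun p => fderiv ℝ u p e

theorem differentiableAt_of_contDiffOn {U : Set E} {u : E → F} {p : E}
    (hu : ContDiffOn ℝ ∞ u U) (hU : IsOpen U) (hp : p ∈ U) : DifferentiableAt ℝ u p :=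
  (hu.contDiffAt (hU.mem_nhds hp)).differentiableAt (by simp)

theorem contDiffOn_dirDeriv {U : Set E} {u : E → F} (hU : IsOpen U) (e : E)
    (hu : ContDiffOn ℝ ∞ u U) : ContDiffOn ℝ ∞ (dirDeriv e u) U :=
  ((contDiffOn_infty_iff_fderiv_of_isOpen hU).1 hu).2.clm_apply contDiffOn_const

theorem contDiffOn_iterate_dirDeriv {U : Set E} {u : E → F} (hU : IsOpen U) (e : E)
    (hu : ContDiffOn ℝ ∞ u U) (n : ℕ) : ContDiffOn ℝ ∞ ((dirDeriv e)^[n] u) U := by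
  induction n with
  | zero => exact hu
  | succ n ih => rw [Function.iterate_succ_apply']; exact contDiffOn_dirDeriv hU e ih

theorem iterate_dirDeriv_comp_equiv (L : E ≃L[ℝ] E) (e : E) (u : E → F) (n : ℕ) :
    (dirDeriv e)^[n] (u ∘ L) = (dirDeriv (L e))^[n] u ∘ L := by
  refine ((show Function.Semiconj (· ∘ L) (dirDeriv (L e)) (dirDeriv (F := F) e) from
    fun w => ?_).iterate_right n u).symm
  funext p
  simp [dirDeriv, L.comp_right_fderiv]

theorem hasSum_dirDeriv {ι : Type*} [CompleteSpace F] {V : Set E} {v : E → F} {w : ι → E → F}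
    {M : ι → ℝ} {e : E} (hV : IsOpen V) (hv : ∀ p ∈ V, DifferentiableAt ℝ v p)
    (hw : ∀ n, ∀ p ∈ V, DifferentiableAt ℝ (w n) p) (hM : Summable M)
    (hwM : ∀ n, ∀ p ∈ V, ‖dirDeriv e (w n) p‖ ≤ M n) (h : ∀ p ∈ V, HasSum (w · p) (v p))
    {p : E} (hp : p ∈ V) : HasSum (fun n => dirDeriv e (w n) p) (dirDeriv e v p) := by
  have hline : Continuous fun s : ℝ => p + s • e := by fun_prop
  obtain ⟨r, hr, hball⟩ := Metric.isOpen_iff.1 (hV.preimage hline) 0 (by simpa using hp)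
  have hderiv : ∀ {u : E → F} {s : ℝ}, DifferentiableAt ℝ u (p + s • e) →
      HasDerivAt (fun s => u (p + s • e)) (dirDeriv e u (p + s • e)) s := fun {u s} hu =>
    hu.hasFDerivAt.comp_hasDerivAt s
      (by simpa using ((hasDerivAt_id s).smul_const e).const_add p)
  have hsum := hasDerivAt_tsum_of_isPreconnected (g := fun n s => w n (p + s • e)) hM
    Metric.isOpen_ball (convex_ball (0 : ℝ) r).isPreconnected
    (fun n s hs => hderiv (hw n _ (hball hs))) (fun n s hs => hwM n _ (hball hs))
    (Metric.mem_ball_self hr) (h _ (hball (Metric.mem_ball_self hr))).summable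
    (Metric.mem_ball_self hr)
  have htsum : (fun s : ℝ => ∑' n, w n (p + s • e)) =ᶠ[𝓝 0] fun s => v (p + s • e) := by
    filter_upwards [Metric.ball_mem_nhds 0 hr] with s hs using (h _ (hball hs)).tsum_eq
  have heq := (hsum.congr_of_eventuallyEq htsum.symm).unique
    (hderiv (hv _ (hball (Metric.mem_ball_self hr))))
  simp only [zero_smul, add_zero] at heq
  exact heq ▸ (hM.of_norm_bounded (hwM · p hp)).hasSum

theorem hasSum_iterate_dirDeriv {ι : Type*} [CompleteSpace F] {V : Set E} {v : E → F}
    {w : ι → E → F} {M : ℕ → ι → ℝ} {e : E} (hV : IsOpen V) (hv : ContDiffOn ℝ ∞ v V)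
    (hw : ∀ n, ContDiffOn ℝ ∞ (w n) V) (hM : ∀ l, Summable (M l))
    (hwM : ∀ l n, ∀ p ∈ V, ‖(dirDeriv e)^[l] (w n) p‖ ≤ M l n)
    (h : ∀ p ∈ V, HasSum (w · p) (v p)) (l : ℕ) :
    ∀ p ∈ V, HasSum (fun n => (dirDeriv e)^[l] (w n) p) ((dirDeriv e)^[l] v p) := by
  induction l with
  | zero => exact h
  | succ l ih =>
    simp only [Function.iterate_succ_apply']
    exact fun p hp => hasSum_dirDeriv hV
      (fun q => differentiableAt_of_contDiffOn (contDiffOn_iterate_dirDeriv hV e hv l) hV)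
      (fun n q => differentiableAt_of_contDiffOn (contDiffOn_iterate_dirDeriv hV e (hw n) l) hV)
      (hM (l + 1)) (by simpa only [Function.iterate_succ_apply'] using hwM (l + 1)) ih hp

theorem hasSum_iterate_dirDeriv_iterate_dirDeriv {ι : Type*} [CompleteSpace F] {V : Set E}
    {v : E → F} {w : ι → E → F} {M : ℕ → ℕ → ι → ℝ} {e e' : E} (hV : IsOpen V)
    (hv : ContDiffOn ℝ ∞ v V) (hw : ∀ n, ContDiffOn ℝ ∞ (w n) V) (hM : ∀ l m, Summable (M l m))
    (hwM : ∀ l m n, ∀ p ∈ V, ‖(dirDeriv e)^[l] ((dirDeriv e')^[m] (w n)) p‖ ≤ M l m n)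
    (h : ∀ p ∈ V, HasSum (w · p) (v p)) (l m : ℕ) :
    ∀ p ∈ V, HasSum (fun n => (dirDeriv e)^[l] ((dirDeriv e')^[m] (w n)) p)
      ((dirDeriv e)^[l] ((dirDeriv e')^[m] v) p) :=
  hasSum_iterate_dirDeriv hV (contDiffOn_iterate_dirDeriv hV e' hv m)
    (fun n => contDiffOn_iterate_dirDeriv hV e' (hw n) m) (hM · m) (fun l => hwM l m)
    (hasSum_iterate_dirDeriv hV hv hw (hM 0) (hwM 0) h m) l

end DirDeriv

/-! ### Partial derivatives in the plane -/

theorem contDiffOn_pd1 {U : Set (ℝ × ℝ)} {u : ℝ × ℝ → ℝ} (hU : IsOpen U)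
    (hu : ContDiffOn ℝ ∞ u U) : ContDiffOn ℝ ∞ (pd1 u) U :=
  contDiffOn_dirDeriv hU (1, 0) hu

theorem contDiffOn_pd2 {U : Set (ℝ × ℝ)} {u : ℝ × ℝ → ℝ} (hU : IsOpen U)
    (hu : ContDiffOn ℝ ∞ u U) : ContDiffOn ℝ ∞ (pd2 u) U :=
  contDiffOn_dirDeriv hU (0, 1) hu

theorem hasDerivAt_pd1 {u : ℝ × ℝ → ℝ} {x t : ℝ} (hu : DifferentiableAt ℝ u (x, t)) :
    HasDerivAt (fun y => u (y, t)) (pd1 u (x, t)) x :=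
  hu.hasFDerivAt.comp_hasDerivAt x ((hasDerivAt_id x).prodMk (hasDerivAt_const x t))

theorem hasDerivAt_pd2 {u : ℝ × ℝ → ℝ} {x t : ℝ} (hu : DifferentiableAt ℝ u (x, t)) :
    HasDerivAt (fun s => u (x, s)) (pd2 u (x, t)) t :=
  hu.hasFDerivAt.comp_hasDerivAt t ((hasDerivAt_const t x).prodMk (hasDerivAt_id t))

theorem pd1_mul {f g : ℝ → ℝ} (hf : Differentiable ℝ f) (hg : Differentiable ℝ g) :
    pd1 (fun p => f p.1 * g p.2) = fun p => deriv f p.1 * g p.2 := by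
  funext p
  exact (hasDerivAt_pd1 (u := fun p => f p.1 * g p.2) (by fun_prop)).unique
    ((hf p.1).hasDerivAt.mul_const (g p.2))

theorem pd2_mul {f g : ℝ → ℝ} (hf : Differentiable ℝ f) (hg : Differentiable ℝ g) :
    pd2 (fun p => f p.1 * g p.2) = fun p => f p.1 * deriv g p.2 := by
  funext p
  exact (hasDerivAt_pd2 (u := fun p => f p.1 * g p.2) (by fun_prop)).unique
    ((hg p.2).hasDerivAt.const_mul (f p.1))

theorem iterate_pd1_iterate_pd2_mul {f g : ℝ → ℝ} (hf : ContDiff ℝ ∞ f) (hg : ContDiff ℝ ∞ g)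
    (l m : ℕ) : pd1^[l] (pd2^[m] fun p => f p.1 * g p.2) =
      fun p => iteratedDeriv l f p.1 * iteratedDeriv m g p.2 := by
  have hdiff : ∀ {h : ℝ → ℝ}, ContDiff ℝ ∞ h → ∀ n, Differentiable ℝ (iteratedDeriv n h) :=
    fun hh n => hh.differentiable_iteratedDeriv n (mod_cast WithTop.coe_lt_top n)
  induction l with
  | zero =>
    induction m with
    | zero => simp
    | succ m ih =>
      rw [Function.iterate_zero, id] at ih ⊢
      rw [Function.iterate_succ_apply', ih, pd2_mul (hdiff hf 0) (hdiff hg m)]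
      simp [iteratedDeriv_succ]
  | succ l ih =>
    rw [Function.iterate_succ_apply', ih, pd1_mul (hdiff hf l) (hdiff hg m)]
    simp [iteratedDeriv_succ]

theorem iterate_pd1_comp_swap (u : ℝ × ℝ → ℝ) (n : ℕ) :
    pd1^[n] (u ∘ Prod.swap) = pd2^[n] u ∘ Prod.swap :=
  iterate_dirDeriv_comp_equiv (.prodComm ℝ ℝ ℝ) (1, 0) u n

theorem iterate_pd2_comp_swap (u : ℝ × ℝ → ℝ) (n : ℕ) :
    pd2^[n] (u ∘ Prod.swap) = pd1^[n] u ∘ Prod.swap :=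
  iterate_dirDeriv_comp_equiv (.prodComm ℝ ℝ ℝ) (0, 1) u n

/-! ### Integrals over cross-sections -/

theorem hasDerivAt_intervalIntegral_of_continuousOn {E : Type*} [NormedAddCommGroup E]
    [NormedSpace ℝ E] {U : Set (ℝ × ℝ)} {f f' : ℝ × ℝ → E} {a b x : ℝ} (hU : IsOpen U)
    (hx : ∀ t ∈ uIcc a b, (x, t) ∈ U) (hf : ContinuousOn f U) (hf' : ContinuousOn f' U)
    (hderiv : ∀ p ∈ U, HasDerivAt (fun y => f (y, p.2)) (f' p) p.1) :
    HasDerivAt (fun y => ∫ t in a..b, f (y, t)) (∫ t in a..b, f' (x, t)) x := by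
  have htube : ∀ᶠ y in 𝓝 x, ∀ t ∈ uIcc a b, (y, t) ∈ U :=
    isCompact_uIcc.eventually_forall_of_forall_eventually fun t ht => hU.mem_nhds (hx t ht)
  obtain ⟨r, hr, hrU⟩ := Metric.nhds_basis_closedBall.eventually_iff.1 htube
  have hsub : Metric.closedBall x r ×ˢ uIcc a b ⊆ U := fun p hp => hrU hp.1 p.2 hp.2
  obtain ⟨M, hM⟩ := ((isCompact_closedBall x r).prod isCompact_uIcc).exists_bound_of_continuousOn
    (hf'.mono hsub)
  have hslice : ∀ {g : ℝ × ℝ → E}, ContinuousOn g U → ∀ y ∈ Metric.closedBall x r,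
      ContinuousOn (fun t => g (y, t)) (uIcc a b) := fun hg y hy =>
    hg.comp (by fun_prop) fun t ht => hsub ⟨hy, ht⟩
  have hmeas : ∀ {g : ℝ × ℝ → E}, ContinuousOn g U → ∀ y ∈ Metric.closedBall x r,
      AEStronglyMeasurable (fun t => g (y, t)) (volume.restrict (uIoc a b)) := fun hg y hy =>
    ((hslice hg y hy).mono uIoc_subset_uIcc).aestronglyMeasurable measurableSet_uIoc
  have hx' : x ∈ Metric.closedBall x r := Metric.mem_closedBall_self hr.le
  refine (intervalIntegral.hasDerivAt_integral_of_dominated_loc_of_deriv_le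
    (F := fun y t => f (y, t)) (F' := fun y t => f' (y, t)) (bound := fun _ => M)
    (Metric.closedBall_mem_nhds x hr) ?_ (hslice hf x hx').intervalIntegrable
    (hmeas hf' x hx') ?_ intervalIntegrable_const ?_).2
  · filter_upwards [Metric.closedBall_mem_nhds x hr] with y using hmeas hf y
  · exact ae_of_all _ fun t ht y hy => hM (y, t) ⟨hy, uIoc_subset_uIcc ht⟩
  · exact ae_of_all _ fun t ht y hy => hderiv (y, t) (hsub ⟨hy, uIoc_subset_uIcc ht⟩)

theorem integral_deriv_deriv_mul_sin {f f' f'' : ℝ → ℝ} {a b : ℝ} (κ : ℝ)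
    (hf : ∀ t ∈ uIcc a b, HasDerivAt f (f' t) t) (hf' : ∀ t ∈ uIcc a b, HasDerivAt f' (f'' t) t)
    (hf'' : ContinuousOn f'' (uIcc a b)) :
    ∫ t in a..b, f'' t * sin (κ * t) =
      f' b * sin (κ * b) - f' a * sin (κ * a) - κ * (f b * cos (κ * b) - f a * cos (κ * a))
        - κ ^ 2 * ∫ t in a..b, f t * sin (κ * t) := by
  have hlin : ∀ t, HasDerivAt (κ * ·) κ t := fun t => by simpa using (hasDerivAt_id t).const_mul κ
  have hfc : ContinuousOn f (uIcc a b) := fun t ht => (hf t ht).continuousAt.continuousWithinAt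
  have hint : ∀ {g : ℝ → ℝ}, ContinuousOn g (uIcc a b) →
      IntervalIntegrable (fun t => g t * sin (κ * t)) volume a b := fun hg =>
    (hg.mul (by fun_prop)).intervalIntegrable
  have hprim : ∀ t ∈ uIcc a b, HasDerivAt (fun t => f' t * sin (κ * t) - κ * (f t * cos (κ * t)))
      (f'' t * sin (κ * t) + κ ^ 2 * (f t * sin (κ * t))) t := fun t ht => by
    convert! ((hf' t ht).mul (hlin t).sin).sub (((hf t ht).mul (hlin t).cos).const_mul κ) using 1
    ring
  have hftc := intervalIntegral.integral_eq_sub_of_hasDerivAt hprim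
    ((hint hf'').add ((hint hfc).const_mul _))
  rw [intervalIntegral.integral_add (hint hf'') ((hint hfc).const_mul _),
    intervalIntegral.integral_const_mul] at hftc
  linear_combination hftc

/-! ### Stability of a linear equation of second order -/

theorem abs_sub_mul_le_of_approx_ode {c δ x R : ℝ} {C D A A' A'' : ℝ → ℝ} (hxR : x ≤ R)
    (hC : ∀ z, HasDerivAt C (D z) z) (hD : ∀ z, HasDerivAt D (c * C z) z) (hC0 : C 0 = 1)
    (hD0 : D 0 = 0) (hA : ∀ y ∈ Icc x R, HasDerivAt A (A' y) y)
    (hA' : ∀ y ∈ Icc x R, HasDerivAt A' (A'' y) y) (hR : A' R = 0)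
    (hδ : ∀ y ∈ Ico x R, |A'' y - c * A y| ≤ δ) :
    |A x - C (R - x) * A R| ≤ δ * (∫ z in 0..R - x, |C z|) * (R - x) := by
  have hCc : Continuous C := continuous_iff_continuousAt.2 fun z => (hC z).continuousAt
  have hCi : ∀ p q, IntervalIntegrable C volume p q := hCc.intervalIntegrable
  set S : ℝ → ℝ := fun z => ∫ s in 0..z, C s with hS
  have hSd : ∀ z, HasDerivAt S (C z) z := fun z => hCc.integral_hasStrictDerivAt 0 z |>.hasDerivAt
  have hDS : ∀ z, D z = c * S z := fun z => by
    rw [hS, ← intervalIntegral.integral_const_mul, intervalIntegral.integral_eq_sub_of_hasDerivAt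
      (fun y _ => hD y) ((hCi 0 z).const_mul c), hD0, sub_zero]
  have hSK : ∀ z ∈ Icc 0 (R - x), |S z| ≤ ∫ s in 0..R - x, |C s| := fun z hz =>
    (intervalIntegral.abs_integral_le_integral_abs hz.1).trans <|
      intervalIntegral.integral_mono_interval le_rfl hz.1 hz.2
        (ae_of_all _ fun _ => abs_nonneg _) (hCi _ _).abs
  -- The Wronskian of `A` and the solution `S (· - x)` is constant up to the defect `A'' - c A`.
  have hW : ∀ y ∈ Icc x R, HasDerivWithinAt (fun y => A' y * S (y - x) - A y * C (y - x))
      ((A'' y - c * A y) * S (y - x)) (Icc x R) y := fun y hy => by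
    have hsub : HasDerivAt (fun y => y - x) 1 y := (hasDerivAt_id y).sub_const x
    convert! (((hA' y hy).mul ((hSd _).comp y hsub)).sub
      ((hA y hy).mul ((hC _).comp y hsub))).hasDerivWithinAt using 1
    simp only [hDS, Function.comp_apply]
    ring
  have hbound := norm_image_sub_le_of_norm_deriv_le_segment' hW
    (C := δ * ∫ s in 0..R - x, |C s|) (fun y hy => ?_) R (right_mem_Icc.2 hxR)
  · simpa [hS, hR, hC0, neg_add_eq_sub, mul_comm] using hbound
  · rw [norm_mul, Real.norm_eq_abs, Real.norm_eq_abs]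
    exact mul_le_mul (hδ y hy) (hSK _ ⟨by linarith [hy.1], by linarith [hy.2]⟩)
      (abs_nonneg _) ((abs_nonneg _).trans (hδ y hy))

/-! ### Sine coefficients on the arm -/

/-- The properties of an eigenfunction on the horizontal arm `(0, R) × (-1, 0)` of the guide that
enter the decay estimate, with eigenvalue `lam`. Both the first eigenfunction and its reflection
in the diagonal have them. -/
structure IsArmEigenfunction (R lam : ℝ) (v : ℝ × ℝ → ℝ) : Prop where
  smooth : ∃ U, IsOpen U ∧ Ioc 0 R ×ˢ Ioo (-1) 0 ⊆ U ∧ ContDiffOn ℝ ∞ v U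
  cont : ContinuousOn v (Icc 0 R ×ˢ Icc (-1) 0)
  bot : ∀ x ∈ Ioc 0 R, v (x, -1) = 0
  top : ∀ x ∈ Ioc 0 R, v (x, 0) = 0
  neu : ∀ t ∈ Ioo (-1 : ℝ) 0, pd1 v (R, t) = 0
  pde : ∀ x ∈ Ioo 0 R, ∀ t ∈ Ioo (-1 : ℝ) 0,
    pd1 (pd1 v) (x, t) + pd2 (pd2 v) (x, t) = -lam * v (x, t)
  pos : ∀ x ∈ Ioo 0 R, ∀ t ∈ Ioo (-1 : ℝ) 0, 0 < v (x, t)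
  mass : ∫ p in Ioo 0 R ×ˢ Ioo (-1) 0, v p ^ 2 ≤ 1

/-- The `k`-th sine coefficient of the cross-section `v (x, ·)`, without the normalizing
factor `2`. -/
def coef (v : ℝ × ℝ → ℝ) (k : ℕ) (x : ℝ) : ℝ := ∫ t in (-1 : ℝ)..0, v (x, t) * sin (k * π * t)

/-- The function `v` precomposed with the contraction by `θ` of the cross-section towards its
midpoint `-1/2`. For `θ < 1` it is smooth up to `t = -1` and `t = 0`, where `v` is only known to be
continuous. -/
def squeeze (θ : ℝ) (v : ℝ × ℝ → ℝ) (p : ℝ × ℝ) : ℝ := v (p.1, θ * (p.2 + 1 / 2) - 1 / 2)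

theorem contraction_mem_Ioo {θ τ : ℝ} (hθ : θ ∈ Ioo (0 : ℝ) 1) (hτ : τ ∈ Icc (-1 : ℝ) 0) :
    θ * (τ + 1 / 2) - 1 / 2 ∈ Ioo (-1 : ℝ) 0 := by
  constructor <;> nlinarith [hθ.1, hθ.2, hτ.1, hτ.2]

theorem continuousOn_squeeze {U : Set (ℝ × ℝ)} {v : ℝ × ℝ → ℝ} (hv : ContinuousOn v U) (θ : ℝ) :
    ContinuousOn (squeeze θ v) ((fun p : ℝ × ℝ => (p.1, θ * (p.2 + 1 / 2) - 1 / 2)) ⁻¹' U) :=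
  hv.comp (by fun_prop) fun _ hp => hp

theorem intervalIntegrable_mul_sin {v : ℝ × ℝ → ℝ} {x : ℝ} (a : ℝ)
    (hv : ContinuousOn (fun t => v (x, t)) (Icc (-1) 0)) :
    IntervalIntegrable (fun t => v (x, t) * sin (a * t)) volume (-1) 0 :=
  (hv.mul (by fun_prop)).intervalIntegrable_of_Icc (by norm_num)

theorem abs_coef_le {v : ℝ × ℝ → ℝ} {x M : ℝ} (k : ℕ) (hv : ∀ t ∈ Icc (-1 : ℝ) 0, |v (x, t)| ≤ M) :
    |coef v k x| ≤ M := by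
  have hbound := intervalIntegral.norm_integral_le_of_norm_le_const (a := -1) (b := 0)
    (f := fun t => v (x, t) * sin (k * π * t)) (C := M) fun t ht => ?_
  · simpa [coef] using hbound
  · rw [uIoc_of_le (by norm_num)] at ht
    rw [norm_mul]
    exact (mul_le_of_le_one_right (norm_nonneg _) (abs_sin_le_one _)).trans
      (hv t (Ioc_subset_Icc_self ht))

theorem coef_sub {v w : ℝ × ℝ → ℝ} {x : ℝ} (k : ℕ)
    (hv : ContinuousOn (fun t => v (x, t)) (Icc (-1) 0))
    (hw : ContinuousOn (fun t => w (x, t)) (Icc (-1) 0)) :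
    coef (v - w) k x = coef v k x - coef w k x := by
  simp only [coef, Pi.sub_apply, sub_mul]
  exact intervalIntegral.integral_sub (intervalIntegrable_mul_sin _ hv)
    (intervalIntegrable_mul_sin _ hw)

theorem hasDerivAt_coef_squeeze {U : Set (ℝ × ℝ)} {v : ℝ × ℝ → ℝ} {θ x : ℝ} (k : ℕ)
    (hU : IsOpen U) (hv : ContDiffOn ℝ ∞ v U) (hθ : θ ∈ Ioo (0 : ℝ) 1)
    (hx : ∀ t ∈ Ioo (-1 : ℝ) 0, (x, t) ∈ U) :
    HasDerivAt (coef (squeeze θ v) k) (coef (squeeze θ (pd1 v)) k x) x := by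
  have hpd : ContinuousOn (pd1 v) U := (contDiffOn_pd1 hU hv).continuousOn
  refine hasDerivAt_intervalIntegral_of_continuousOn
    (f := fun p => squeeze θ v p * sin (k * π * p.2))
    (f' := fun p => squeeze θ (pd1 v) p * sin (k * π * p.2))
    (hU.preimage (f := fun p : ℝ × ℝ => (p.1, θ * (p.2 + 1 / 2) - 1 / 2)) (by fun_prop))
    (fun t ht => hx _ (contraction_mem_Ioo hθ ?_)) ((continuousOn_squeeze hv.continuousOn θ).mul
    (by fun_prop)) ((continuousOn_squeeze hpd θ).mul (by fun_prop)) fun p hp => ?_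
  · rwa [uIcc_of_le (by norm_num)] at ht
  · exact (hasDerivAt_pd1 (differentiableAt_of_contDiffOn hv hU hp)).mul_const
      (sin (k * π * p.2))

theorem sq_mul_coef_squeeze_pd2_pd2 {U : Set (ℝ × ℝ)} {v : ℝ × ℝ → ℝ} {θ x : ℝ} (k : ℕ)
    (hU : IsOpen U) (hv : ContDiffOn ℝ ∞ v U) (hθ : θ ∈ Ioo (0 : ℝ) 1)
    (hx : ∀ t ∈ Ioo (-1 : ℝ) 0, (x, t) ∈ U) :
    θ ^ 2 * coef (squeeze θ (pd2 (pd2 v))) k x =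
      -(k * π) * (squeeze θ v (x, 0) - squeeze θ v (x, -1) * cos (k * π))
        - (k * π) ^ 2 * coef (squeeze θ v) k x := by
  have hmem : ∀ t ∈ uIcc (-1 : ℝ) 0, (x, θ * (t + 1 / 2) - 1 / 2) ∈ U := fun t ht =>
    hx _ (contraction_mem_Ioo hθ (by rwa [uIcc_of_le (by norm_num)] at ht))
  have hpd : ContDiffOn ℝ ∞ (pd2 v) U := contDiffOn_pd2 hU hv
  have hpd' : ContinuousOn (pd2 (pd2 v)) U := (contDiffOn_pd2 hU hpd).continuousOn
  have haff : ∀ t : ℝ, HasDerivAt (fun t => θ * (t + 1 / 2) - 1 / 2) θ t := fun t => by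
    simpa only [id, mul_one] using
      (((hasDerivAt_id t).add_const (1 / 2)).const_mul θ).sub_const (1 / 2)
  have hsqueeze : ∀ {w : ℝ × ℝ → ℝ}, ContDiffOn ℝ ∞ w U → ∀ t ∈ uIcc (-1 : ℝ) 0,
      HasDerivAt (fun t => squeeze θ w (x, t)) (squeeze θ (pd2 w) (x, t) * θ) t :=
    fun {w} hw t ht => HasDerivAt.comp (h₂ := fun s => w (x, s)) t
      (hasDerivAt_pd2 (differentiableAt_of_contDiffOn hw hU (hmem t ht))) (haff t)
  have hparts := integral_deriv_deriv_mul_sin (k * π) (hsqueeze hv)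
    (fun t ht => (hsqueeze hpd t ht).mul_const θ)
    (((hpd'.comp (by fun_prop) hmem).mul continuousOn_const).mul continuousOn_const)
  have hsin : sin (k * π * -1) = 0 := by simp [sin_nat_mul_pi]
  have hcos : cos (k * π * -1) = cos (k * π) := by simp
  simp only [hsin, hcos, mul_zero, sin_zero, cos_zero] at hparts
  rw [coef, coef, ← intervalIntegral.integral_const_mul]
  convert! hparts using 1
  · exact intervalIntegral.integral_congr fun t _ => by simp only [squeeze]; ring
  · ring

theorem eventually_abs_squeeze_sub_le {K : Set ℝ} {v : ℝ × ℝ → ℝ} {ε : ℝ} (hK : IsCompact K)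
    (hv : ContinuousOn v (K ×ˢ Icc (-1) 0)) (hε : 0 < ε) :
    ∀ᶠ θ in 𝓝[<] 1, ∀ x ∈ K, ∀ t ∈ Icc (-1 : ℝ) 0, |squeeze θ v (x, t) - v (x, t)| ≤ ε := by
  obtain ⟨η, hη, hηv⟩ := Metric.uniformContinuousOn_iff.1
    ((hK.prod isCompact_Icc).uniformContinuousOn_of_continuous hv) ε hε
  filter_upwards [Ioo_mem_nhdsLT (show (0 : ℝ) < 1 by norm_num),
    Ioo_mem_nhdsLT (sub_lt_self 1 hη)] with θ hθ hθη x hx t ht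
  refine (hηv (x, _) ⟨hx, Ioo_subset_Icc_self (contraction_mem_Ioo hθ ht)⟩ (x, t) ⟨hx, ht⟩ ?_).le
  rw [Prod.dist_eq, dist_self, Real.dist_eq]
  refine max_lt hη (abs_lt.2 ⟨?_, ?_⟩) <;> nlinarith [ht.1, ht.2, hθη.1, hθ.2]

namespace IsArmEigenfunction

variable {R lam : ℝ} {v : ℝ × ℝ → ℝ}

theorem continuousOn_slice (h : IsArmEigenfunction R lam v) {x : ℝ} (hx : x ∈ Icc 0 R) :
    ContinuousOn (fun t => v (x, t)) (Icc (-1) 0) :=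
  h.cont.comp (by fun_prop) fun _ ht => ⟨hx, ht⟩

theorem continuousOn_squeeze_slice (h : IsArmEigenfunction R lam v) {θ x : ℝ}
    (hθ : θ ∈ Ioo (0 : ℝ) 1) (hx : x ∈ Icc 0 R) :
    ContinuousOn (fun t => squeeze θ v (x, t)) (Icc (-1) 0) :=
  h.cont.comp (by fun_prop) fun _ ht => ⟨hx, Ioo_subset_Icc_self (contraction_mem_Ioo hθ ht)⟩

theorem coef_squeeze_pd1_pd1_sub (h : IsArmEigenfunction R lam v) (k : ℕ) {θ x : ℝ}
    (hθ : θ ∈ Ioo (0 : ℝ) 1) (hx : x ∈ Ioo 0 R) :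
    coef (squeeze θ (pd1 (pd1 v))) k x - ((k * π) ^ 2 - lam) * coef (squeeze θ v) k x =
      (1 / θ ^ 2 - 1) * (k * π) ^ 2 * coef (squeeze θ v) k x
        + 1 / θ ^ 2 * (k * π) * (squeeze θ v (x, 0) - squeeze θ v (x, -1) * cos (k * π)) := by
  obtain ⟨U, hU, hsub, hv⟩ := h.smooth
  have hmem : ∀ t ∈ Icc (-1 : ℝ) 0, (x, θ * (t + 1 / 2) - 1 / 2) ∈ U := fun t ht =>
    hsub ⟨Ioo_subset_Ioc_self hx, contraction_mem_Ioo hθ ht⟩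
  have hslice : ∀ {w : ℝ × ℝ → ℝ}, ContDiffOn ℝ ∞ w U →
      IntervalIntegrable (fun t => squeeze θ w (x, t) * sin (k * π * t)) volume (-1) 0 :=
    fun hw => intervalIntegrable_mul_sin _ (hw.continuousOn.comp (by fun_prop) hmem)
  have hpde : coef (squeeze θ (pd1 (pd1 v))) k x + coef (squeeze θ (pd2 (pd2 v))) k x
      = -lam * coef (squeeze θ v) k x := by
    rw [coef, coef, coef, ← intervalIntegral.integral_add
      (hslice (contDiffOn_pd1 hU (contDiffOn_pd1 hU hv)))
      (hslice (contDiffOn_pd2 hU (contDiffOn_pd2 hU hv))),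
      ← intervalIntegral.integral_const_mul]
    refine intervalIntegral.integral_congr fun t ht => ?_
    rw [uIcc_of_le (by norm_num)] at ht
    simp only [squeeze]
    linear_combination sin (k * π * t) * h.pde x hx _ (contraction_mem_Ioo hθ ht)
  have hparts := sq_mul_coef_squeeze_pd2_pd2 k hU hv hθ fun t ht =>
    hsub ⟨Ioo_subset_Ioc_self hx, ht⟩
  have hθ0 : θ ≠ 0 := hθ.1.ne'
  field_simp
  linear_combination θ ^ 2 * hpde - hparts

theorem abs_coef_squeeze_pd1_pd1_sub_le (h : IsArmEigenfunction R lam v) (k : ℕ) {θ x ε M : ℝ}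
    (hθ : θ ∈ Ioo (0 : ℝ) 1) (hx : x ∈ Ioo 0 R) (hθε : |1 / θ ^ 2 - 1| ≤ ε)
    (htop : |squeeze θ v (x, 0)| ≤ ε) (hbot : |squeeze θ v (x, -1)| ≤ ε)
    (hM : |coef (squeeze θ v) k x| ≤ M) :
    |coef (squeeze θ (pd1 (pd1 v))) k x - ((k * π) ^ 2 - lam) * coef (squeeze θ v) k x| ≤
      ε * ((k * π) ^ 2 * M + 2 * (k * π) * (1 + ε)) := by
  have hε : 0 ≤ ε := (abs_nonneg _).trans htop
  have hsides : |squeeze θ v (x, 0) - squeeze θ v (x, -1) * cos (k * π)| ≤ 2 * ε := by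
    refine (abs_sub _ _).trans ?_
    rw [abs_mul, two_mul]
    exact add_le_add htop ((mul_le_of_le_one_right (abs_nonneg _) (abs_cos_le_one _)).trans hbot)
  rw [h.coef_squeeze_pd1_pd1_sub k hθ hx]
  calc _ ≤ |1 / θ ^ 2 - 1| * (k * π) ^ 2 * |coef (squeeze θ v) k x|
        + 1 / θ ^ 2 * (k * π) * |squeeze θ v (x, 0) - squeeze θ v (x, -1) * cos (k * π)| := by
        refine (abs_add_le _ _).trans_eq ?_
        rw [abs_mul, abs_mul, abs_mul _ (_ - _), abs_of_nonneg (sq_nonneg (k * π)),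
          abs_of_nonneg (show 0 ≤ 1 / θ ^ 2 * (k * π) by positivity)]
    _ ≤ ε * (k * π) ^ 2 * M + (1 + ε) * (k * π) * (2 * ε) := by
        gcongr
        linarith [le_abs_self (1 / θ ^ 2 - 1)]
    _ = _ := by ring

theorem eventually_abs_coef_squeeze_pd1_pd1_sub_le (h : IsArmEigenfunction R lam v) (k : ℕ)
    {x δ : ℝ} (hx : 0 < x) (hδ : 0 < δ) :
    ∀ᶠ θ in 𝓝[<] 1, ∀ y ∈ Ico x R,
      |coef (squeeze θ (pd1 (pd1 v))) k y - ((k * π) ^ 2 - lam) * coef (squeeze θ v) k y| ≤ δ := by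
  have hcont : ContinuousOn v (Icc x R ×ˢ Icc (-1) 0) :=
    h.cont.mono (prod_mono_left (Icc_subset_Icc_left hx.le))
  obtain ⟨M, hM⟩ := (isCompact_Icc.prod isCompact_Icc).exists_bound_of_continuousOn hcont
  have hlim : Tendsto (fun ε => ε * ((k * π) ^ 2 * M + 2 * (k * π) * (1 + ε))) (𝓝[>] 0) (𝓝 0) :=
    (Continuous.tendsto' (by fun_prop) 0 0 (by simp)).mono_left nhdsWithin_le_nhds
  obtain ⟨ε, hεδ, hε⟩ := ((hlim.eventually (gt_mem_nhds hδ)).and self_mem_nhdsWithin).exists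
  have hθε : ∀ᶠ θ : ℝ in 𝓝[<] 1, |1 / θ ^ 2 - 1| < ε := by
    have hca : ContinuousAt (fun θ : ℝ => |1 / θ ^ 2 - 1|) 1 := by fun_prop (disch := norm_num)
    exact (hca.eventually (gt_mem_nhds (by simpa using hε))).filter_mono nhdsWithin_le_nhds
  filter_upwards [Ioo_mem_nhdsLT (show (0 : ℝ) < 1 by norm_num), hθε,
    eventually_abs_squeeze_sub_le isCompact_Icc hcont hε] with θ hθ hθε hclose y hy
  have hyR : y ∈ Icc x R := Ico_subset_Icc_self hy
  have hy0 : 0 < y := hx.trans_le hy.1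
  refine (h.abs_coef_squeeze_pd1_pd1_sub_le k hθ ⟨hy0, hy.2⟩ hθε.le ?_ ?_ ?_).trans hεδ.le
  · simpa [h.top y ⟨hy0, hy.2.le⟩] using hclose y hyR 0 (by norm_num)
  · simpa [h.bot y ⟨hy0, hy.2.le⟩] using hclose y hyR (-1) (by norm_num)
  · exact abs_coef_le k fun t ht => hM _ ⟨hyR, Ioo_subset_Icc_self (contraction_mem_Ioo hθ ht)⟩

theorem tendsto_coef_squeeze (h : IsArmEigenfunction R lam v) (k : ℕ) {x : ℝ}
    (hx : x ∈ Icc 0 R) :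
    Tendsto (fun θ => coef (squeeze θ v) k x) (𝓝[<] 1) (𝓝 (coef v k x)) := by
  refine Metric.nhds_basis_closedBall.tendsto_right_iff.2 fun ε hε => ?_
  filter_upwards [Ioo_mem_nhdsLT (show (0 : ℝ) < 1 by norm_num),
    eventually_abs_squeeze_sub_le isCompact_Icc h.cont hε] with θ hθ hclose
  rw [mem_closedBall_iff_norm, ← coef_sub k (h.continuousOn_squeeze_slice hθ hx)
    (h.continuousOn_slice hx)]
  exact abs_coef_le k (hclose x hx)

theorem coef_eq (h : IsArmEigenfunction R lam v) (k : ℕ) {C D : ℝ → ℝ}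
    (hC : ∀ z, HasDerivAt C (D z) z) (hD : ∀ z, HasDerivAt D (((k * π) ^ 2 - lam) * C z) z)
    (hC0 : C 0 = 1) (hD0 : D 0 = 0) {x : ℝ} (hx : x ∈ Ioc 0 R) :
    coef v k x = C (R - x) * coef v k R := by
  obtain ⟨U, hU, hsub, hv⟩ := h.smooth
  have hlim : Tendsto
      (fun θ => |coef (squeeze θ v) k x - C (R - x) * coef (squeeze θ v) k R|) (𝓝[<] 1)
      (𝓝 |coef v k x - C (R - x) * coef v k R|) :=
    ((h.tendsto_coef_squeeze k (Ioc_subset_Icc_self hx)).sub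
      ((h.tendsto_coef_squeeze k (right_mem_Icc.2 (hx.1.le.trans hx.2))).const_mul _)).abs
  set L : ℝ := (∫ z in 0..R - x, |C z|) * (R - x)
  have hL : 0 ≤ L := mul_nonneg (intervalIntegral.integral_nonneg (sub_nonneg.2 hx.2)
    fun z _ => abs_nonneg _) (sub_nonneg.2 hx.2)
  refine eq_of_forall_dist_le fun ε hε => le_of_tendsto hlim ?_
  filter_upwards [Ioo_mem_nhdsLT (show (0 : ℝ) < 1 by norm_num),
    h.eventually_abs_coef_squeeze_pd1_pd1_sub_le k hx.1 (show 0 < ε / (L + 1) by positivity)]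
    with θ hθ hδ
  have hmem : ∀ y ∈ Icc x R, ∀ t ∈ Ioo (-1 : ℝ) 0, (y, t) ∈ U := fun y hy t ht =>
    hsub ⟨⟨hx.1.trans_le hy.1, hy.2⟩, ht⟩
  have hneu : coef (squeeze θ (pd1 v)) k R = 0 :=
    abs_nonpos_iff.1 <| abs_coef_le k fun t ht => by
      rw [squeeze, h.neu _ (contraction_mem_Ioo hθ ht), abs_zero]
  calc _ ≤ ε / (L + 1) * (∫ z in 0..R - x, |C z|) * (R - x) :=
        abs_sub_mul_le_of_approx_ode hx.2 hC hD hC0 hD0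
          (fun y hy => hasDerivAt_coef_squeeze k hU hv hθ (hmem y hy))
          (fun y hy => hasDerivAt_coef_squeeze k hU (contDiffOn_pd1 hU hv) hθ
            (hmem y hy)) hneu hδ
    _ = ε * (L / (L + 1)) := by ring
    _ ≤ ε := mul_le_of_le_one_right hε.le (div_le_one_of_le₀ (by linarith) (by linarith))

theorem coef_eq_cosh (h : IsArmEigenfunction R lam v) (k : ℕ) (hk : lam ≤ (k * π) ^ 2) {x : ℝ}
    (hx : x ∈ Ioc 0 R) :
    coef v k x = cosh (√((k * π) ^ 2 - lam) * (R - x)) * coef v k R := by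
  have hμ := mul_self_sqrt (sub_nonneg.2 hk)
  set μ := √((k * π) ^ 2 - lam)
  have hlin : ∀ z, HasDerivAt (μ * ·) μ z := fun z => by simpa using (hasDerivAt_id z).const_mul μ
  refine h.coef_eq k (C := fun z => cosh (μ * z)) (D := fun z => sinh (μ * z) * μ)
    (fun z => (hlin z).cosh) (fun z => ?_) (by simp) (by simp) hx
  convert! (hlin z).sinh.mul_const μ using 1
  rw [← hμ]
  ring

theorem coef_eq_cos (h : IsArmEigenfunction R lam v) (k : ℕ) (hk : (k * π) ^ 2 ≤ lam) {x : ℝ}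
    (hx : x ∈ Ioc 0 R) :
    coef v k x = cos (√(lam - (k * π) ^ 2) * (R - x)) * coef v k R := by
  have hν := mul_self_sqrt (sub_nonneg.2 hk)
  set ν := √(lam - (k * π) ^ 2)
  have hlin : ∀ z, HasDerivAt (ν * ·) ν z := fun z => by simpa using (hasDerivAt_id z).const_mul ν
  refine h.coef_eq k (C := fun z => cos (ν * z)) (D := fun z => -sin (ν * z) * ν)
    (fun z => (hlin z).cos) (fun z => ?_) (by simp) (by simp) hx
  convert! (hlin z).sin.neg.mul_const ν using 1
  linear_combination cos (ν * z) * hν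

end IsArmEigenfunction

/-! ### Bounds for the sine coefficients -/

theorem abs_iteratedDeriv_cosh_le (n : ℕ) (x : ℝ) : |iteratedDeriv n cosh x| ≤ cosh x := by
  rcases n.even_or_odd' with ⟨m, rfl | rfl⟩
  · rw [iteratedDeriv_even_cosh, abs_of_pos (cosh_pos x)]
  · rw [iteratedDeriv_odd_cosh]
    exact abs_le.2 ⟨by linarith [cosh_add_sinh x, exp_pos x], (sinh_lt_cosh x).le⟩

theorem abs_iteratedDeriv_comp_mul_sub {f : ℝ → ℝ} {l : ℕ} (hf : ContDiff ℝ l f) (μ R x : ℝ) :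
    |iteratedDeriv l (fun y => f (μ * (R - y))) x| =
      |μ| ^ l * |iteratedDeriv l f (μ * (R - x))| := by
  rw [iteratedDeriv_comp_const_sub (f := fun y => f (μ * y)),
    iteratedDeriv_comp_const_mul hf]
  simp [abs_mul]

theorem pow_mul_exp_neg_mul_le {μ r x : ℝ} {n l : ℕ} (hμ : 0 ≤ μ) (hn : n * π ≤ μ)
    (hn' : μ ≤ (n + 1) * π) (hr : r ≤ μ) (hx : 3 / 4 ≤ x) :
    μ ^ l * exp (-(μ * (x - 1 / 2))) ≤
      ((n + 1) * π) ^ l * (exp (-(r * (x - 3 / 4))) * exp (-(n * (π / 4)))) := by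
  rw [← exp_add]
  gcongr
  nlinarith [mul_le_mul_of_nonneg_right hr (sub_nonneg.2 hx)]

namespace IsArmEigenfunction

variable {R lam : ℝ} {v : ℝ × ℝ → ℝ}

theorem coef_sq_le (h : IsArmEigenfunction R lam v) (k : ℕ) {x : ℝ} (hx : x ∈ Ioo 0 R) :
    coef v k x ^ 2 ≤ ∫ t in Ioo (-1 : ℝ) 0, v (x, t) ^ 2 := by
  have hv := h.continuousOn_slice (Ioo_subset_Icc_self hx)
  have hint : ∀ {f : ℝ → ℝ}, ContinuousOn f (Icc (-1) 0) → IntegrableOn f (Ioo (-1) 0) :=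
    fun hf => (hf.integrableOn_compact isCompact_Icc).mono_set Ioo_subset_Icc_self
  have hsin : ContinuousOn (fun t => v (x, t) * sin (k * π * t)) (Icc (-1) 0) :=
    hv.mul (by fun_prop)
  have : IsProbabilityMeasure (volume.restrict (Ioo (-1 : ℝ) 0)) := ⟨by simp⟩
  rw [coef, intervalIntegral.integral_of_le (by norm_num), integral_Ioc_eq_integral_Ioo]
  calc _ ≤ ∫ t in Ioo (-1 : ℝ) 0, (v (x, t) * sin (k * π * t)) ^ 2 :=
        even_two.convexOn_pow.map_integral_le (by fun_prop) isClosed_univ (by simp) (hint hsin)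
          (hint (hsin.pow 2))
    _ ≤ _ := setIntegral_mono (hint (hsin.pow 2)) (hint (hv.pow 2)) fun t => by
        simpa only [Pi.pow_apply, mul_pow] using
          mul_le_of_le_one_right (sq_nonneg _) (sin_sq_le_one _)

theorem mul_sub_le_one_of_le_coef_sq (h : IsArmEigenfunction R lam v) (k : ℕ) {p q D : ℝ}
    (hp : 0 ≤ p) (hpq : p ≤ q) (hq : q ≤ R) (hD : ∀ x ∈ Ioo p q, D ≤ coef v k x ^ 2) :
    D * (q - p) ≤ 1 := by
  have hint : IntegrableOn (fun z => v z ^ 2) (Ioo 0 R ×ˢ Ioo (-1 : ℝ) 0) (volume.prod volume) :=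
    ((h.cont.pow 2).integrableOn_compact (isCompact_Icc.prod isCompact_Icc)).mono_set
      (prod_mono Ioo_subset_Icc_self Ioo_subset_Icc_self)
  have hslices : IntegrableOn (fun x => ∫ t in Ioo (-1 : ℝ) 0, v (x, t) ^ 2) (Ioo 0 R) := by
    rw [IntegrableOn, ← Measure.prod_restrict] at hint
    exact hint.integral_prod_left
  have hsub : Ioo p q ⊆ Ioo 0 R := Ioo_subset_Ioo hp hq
  calc D * (q - p) = ∫ _ in Ioo p q, D := by simp [Measure.real, hpq, mul_comm]
    _ ≤ ∫ x in Ioo p q, ∫ t in Ioo (-1 : ℝ) 0, v (x, t) ^ 2 :=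
        setIntegral_mono_on (by simp) (hslices.mono_set hsub) measurableSet_Ioo
          fun x hx => (hD x hx).trans (h.coef_sq_le k (hsub hx))
    _ ≤ ∫ x in Ioo 0 R, ∫ t in Ioo (-1 : ℝ) 0, v (x, t) ^ 2 :=
        setIntegral_mono_set hslices
          (ae_of_all _ fun x => integral_nonneg fun t => sq_nonneg (v (x, t))) hsub.eventuallyLE
    _ = ∫ p in Ioo 0 R ×ˢ Ioo (-1) 0, v p ^ 2 := (setIntegral_prod _ hint).symm
    _ ≤ 1 := h.mass

theorem coef_one_neg (h : IsArmEigenfunction R lam v) {x : ℝ} (hx : x ∈ Ioo 0 R) :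
    coef v 1 x < 0 := by
  have hint := intervalIntegrable_mul_sin ((1 : ℕ) * π)
    (h.continuousOn_slice (Ioo_subset_Icc_self hx))
  refine neg_pos.1 ?_
  rw [coef, ← intervalIntegral.integral_neg]
  refine intervalIntegral.intervalIntegral_pos_of_pos_on hint.neg (fun t ht => neg_pos.2 ?_)
    (by norm_num)
  refine mul_neg_of_pos_of_neg (h.pos x hx t ht) ?_
  rw [Nat.cast_one, one_mul]
  exact sin_neg_of_neg_of_neg_pi_lt (mul_neg_of_pos_of_neg pi_pos ht.2)
    (by nlinarith [pi_pos, ht.1])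

theorem sqrt_mul_le_pi_div_two (h : IsArmEigenfunction R lam v) : √(lam - π ^ 2) * R ≤ π / 2 := by
  by_contra! hcon
  have hlam : π ^ 2 < lam := by
    by_contra! hle
    rw [sqrt_eq_zero_of_nonpos (sub_nonpos.2 hle), zero_mul] at hcon
    exact hcon.not_gt pi_div_two_pos
  have hν : 0 < √(lam - π ^ 2) := sqrt_pos.2 (sub_pos.2 hlam)
  -- the first zero of the cosine would lie inside the arm
  have hx : R - π / 2 / √(lam - π ^ 2) ∈ Ioo 0 R :=
    ⟨sub_pos.2 ((div_lt_iff₀ hν).2 (by linarith)), sub_lt_self _ (by positivity)⟩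
  have hcoef := h.coef_eq_cos 1 (by simpa using hlam.le) (Ioo_subset_Ioc_self hx)
  rw [Nat.cast_one, one_mul, sub_sub_cancel, mul_div_cancel₀ _ hν.ne', cos_pi_div_two,
    zero_mul] at hcoef
  exact (h.coef_one_neg hx).ne hcoef

theorem sqrt_le_pi_div_two (h : IsArmEigenfunction R lam v) (hR : 1 ≤ R) :
    √(lam - π ^ 2) ≤ π / 2 :=
  (le_mul_of_one_le_right (sqrt_nonneg _) hR).trans h.sqrt_mul_le_pi_div_two

theorem abs_coef_mul_exp_le (h : IsArmEigenfunction R lam v) (hR : 1 / 2 ≤ R) (k : ℕ)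
    (hk : lam ≤ (k * π) ^ 2) :
    |coef v k R| * exp (√((k * π) ^ 2 - lam) * (R - 1 / 2)) ≤ 4 := by
  have hμ : 0 ≤ √((k * π) ^ 2 - lam) := sqrt_nonneg _
  set μ := √((k * π) ^ 2 - lam)
  have hz : 0 ≤ μ * (R - 1 / 2) := mul_nonneg hμ (sub_nonneg.2 hR)
  have hmass : (cosh (μ * (R - 1 / 2)) * coef v k R) ^ 2 * (1 / 2 - 0) ≤ 1 := by
    refine h.mul_sub_le_one_of_le_coef_sq k le_rfl (by norm_num) hR fun x hx => ?_
    rw [h.coef_eq_cosh k hk ⟨hx.1, hx.2.le.trans hR⟩, mul_pow, mul_pow]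
    gcongr
    rw [cosh_le_cosh, abs_of_nonneg hz,
      abs_of_nonneg (mul_nonneg hμ (by linarith [hx.2]))]
    gcongr
    exact hx.2.le
  have hcosh : |cosh (μ * (R - 1 / 2)) * coef v k R| ≤ 2 :=
    abs_le_of_sq_le_sq (by linarith) (by norm_num)
  have hexp : exp (μ * (R - 1 / 2)) ≤ 2 * cosh (μ * (R - 1 / 2)) := by
    linarith [cosh_add_sinh (μ * (R - 1 / 2)), sinh_lt_cosh (μ * (R - 1 / 2))]
  rw [abs_mul, abs_of_pos (cosh_pos _)] at hcosh
  linarith [mul_le_mul_of_nonneg_left hexp (abs_nonneg (coef v k R))]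

theorem abs_coef_one_le (h : IsArmEigenfunction R lam v) (hR : 1 ≤ R) (hlam : π ^ 2 ≤ lam) :
    |coef v 1 R| ≤ 4 := by
  have hν : 0 ≤ √(lam - π ^ 2) := sqrt_nonneg _
  have hν' := h.sqrt_le_pi_div_two hR
  have hform : ∀ x ∈ Ioc 0 R, coef v 1 x = cos (√(lam - π ^ 2) * (R - x)) * coef v 1 R :=
    fun x hx => by simpa using h.coef_eq_cos 1 (by simpa using hlam) hx
  have hmass : coef v 1 R ^ 2 / 2 * (R - (R - 1 / 2)) ≤ 1 := by
    refine h.mul_sub_le_one_of_le_coef_sq 1 (by linarith) (by linarith) le_rfl fun x hx => ?_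
    rw [hform x ⟨by linarith [hx.1], hx.2.le⟩, mul_pow]
    have hcos : √2 / 2 ≤ cos (√(lam - π ^ 2) * (R - x)) := by
      rw [← cos_pi_div_four]
      exact cos_le_cos_of_nonneg_of_le_pi (mul_nonneg hν (by linarith [hx.2]))
        (by linarith [pi_pos]) (by nlinarith [hx.1, hx.2])
    have hsq : 1 / 2 ≤ cos (√(lam - π ^ 2) * (R - x)) ^ 2 := by
      simpa [div_pow, show (2 : ℝ) / 2 ^ 2 = 1 / 2 by norm_num] using
        pow_le_pow_left₀ (by positivity) hcos 2
    linarith [mul_le_mul_of_nonneg_right hsq (sq_nonneg (coef v 1 R))]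
  exact abs_le_of_sq_le_sq (by linarith) (by norm_num)

theorem exists_contDiff_coef_eq_of_le (h : IsArmEigenfunction R lam v) (hR : 1 ≤ R)
    (hlam : 0 ≤ lam) {n : ℕ} (hn : lam ≤ ((n + 1) * π) ^ 2) :
    ∃ g : ℝ → ℝ, ContDiff ℝ ∞ g ∧ (∀ x ∈ Ioc 0 R, coef v (n + 1) x = g x) ∧
      ∀ l, ∀ x ∈ Icc (3 / 4) R, |iteratedDeriv l g x| ≤
        4 * ((n + 1) * π) ^ l * (exp (-(√(π ^ 2 - lam) * (x - 3 / 4))) * exp (-(n * (π / 4)))) := by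
  have hcoef := fun x hx => h.coef_eq_cosh (n + 1) (by exact_mod_cast hn) (x := x) hx
  have hexp := h.abs_coef_mul_exp_le (by linarith) (n + 1) (by exact_mod_cast hn)
  push_cast at hcoef hexp
  set μ := √(((n + 1) * π) ^ 2 - lam) with hμ_def
  have hμ : 0 ≤ μ := sqrt_nonneg _
  have hμn' : μ ≤ (n + 1) * π := (sqrt_le_left (by positivity)).2 (by linarith)
  have hμn : n * π ≤ μ := by
    refine le_sqrt_of_sq_le ?_
    have hlam' := (sqrt_le_left (by positivity)).1 (h.sqrt_le_pi_div_two hR)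
    rcases n.eq_zero_or_pos with rfl | hn0
    · simpa using hn
    · nlinarith [mul_le_mul_of_nonneg_right (Nat.one_le_cast (α := ℝ).2 hn0) (sq_nonneg π)]
  have hμr : √(π ^ 2 - lam) ≤ μ := by
    refine sqrt_le_sqrt (sub_le_sub_right ?_ _)
    exact pow_le_pow_left₀ pi_pos.le (le_mul_of_one_le_left pi_pos.le (by simp)) 2
  refine ⟨fun x => cosh (μ * (R - x)) * coef v (n + 1) R, by fun_prop, hcoef, fun l x hx => ?_⟩
  have hz : 0 ≤ μ * (R - x) := mul_nonneg hμ (sub_nonneg.2 hx.2)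
  have hcosh : cosh (μ * (R - x)) ≤ exp (μ * (R - 1 / 2)) * exp (-(μ * (x - 1 / 2))) := by
    rw [← exp_add, show μ * (R - 1 / 2) + -(μ * (x - 1 / 2)) = μ * (R - x) by ring,
      ← cosh_add_sinh]
    linarith [sinh_nonneg_iff.2 hz]
  rw [iteratedDeriv_mul_const_field, abs_mul, abs_iteratedDeriv_comp_mul_sub contDiff_cosh,
    abs_of_nonneg hμ]
  calc _ ≤ μ ^ l * (exp (μ * (R - 1 / 2)) * exp (-(μ * (x - 1 / 2)))) * |coef v (n + 1) R| := by
        gcongr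
        exact (abs_iteratedDeriv_cosh_le l _).trans hcosh
    _ = (|coef v (n + 1) R| * exp (μ * (R - 1 / 2))) * (μ ^ l * exp (-(μ * (x - 1 / 2)))) := by
        ring
    _ ≤ 4 * _ := mul_le_mul hexp (pow_mul_exp_neg_mul_le hμ hμn hμn' hμr hx.1)
        (by positivity) (by norm_num)
    _ = _ := by ring

theorem exists_contDiff_coef_one_eq (h : IsArmEigenfunction R lam v) (hR : 1 ≤ R)
    (hlam : π ^ 2 ≤ lam) :
    ∃ g : ℝ → ℝ, ContDiff ℝ ∞ g ∧ (∀ x ∈ Ioc 0 R, coef v 1 x = g x) ∧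
      ∀ l x, |iteratedDeriv l g x| ≤ 4 * π ^ l := by
  have hν' : √(lam - π ^ 2) ≤ π := (h.sqrt_le_pi_div_two hR).trans (by linarith [pi_pos])
  have hν : 0 ≤ √(lam - π ^ 2) := sqrt_nonneg _
  refine ⟨fun x => cos (√(lam - π ^ 2) * (R - x)) * coef v 1 R, by fun_prop, fun x hx => ?_,
    fun l x => ?_⟩
  · simpa using h.coef_eq_cos 1 (by simpa using hlam) hx
  rw [iteratedDeriv_mul_const_field, abs_mul, abs_iteratedDeriv_comp_mul_sub contDiff_cos,
    abs_of_nonneg hν]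
  calc _ ≤ π ^ l * 1 * 4 := by
        gcongr
        · exact abs_iteratedDeriv_cos_le_one l _
        · exact h.abs_coef_one_le hR hlam
    _ = _ := by ring

theorem exists_contDiff_coef_eq (h : IsArmEigenfunction R lam v) (hR : 1 ≤ R) (hlam : 0 ≤ lam)
    (n : ℕ) :
    ∃ g : ℝ → ℝ, ContDiff ℝ ∞ g ∧ (∀ x ∈ Ioc 0 R, coef v (n + 1) x = g x) ∧
      ∀ l, ∀ x ∈ Icc (3 / 4) R, |iteratedDeriv l g x| ≤
        4 * ((n + 1) * π) ^ l * (exp (-(√(π ^ 2 - lam) * (x - 3 / 4))) * exp (-(n * (π / 4)))) := by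
  rcases le_total lam (((n + 1) * π) ^ 2) with hn | hn
  · exact h.exists_contDiff_coef_eq_of_le hR hlam hn
  -- only the first mode can oscillate, since `lam ≤ 5π²/4`
  obtain rfl : n = 0 := by
    by_contra hn0
    have hlam' := (sqrt_le_left (by positivity)).1 (h.sqrt_le_pi_div_two hR)
    have hn1 : (1 : ℝ) ≤ n := Nat.one_le_cast.2 (Nat.one_le_iff_ne_zero.2 hn0)
    nlinarith [mul_le_mul_of_nonneg_right hn1 (sq_nonneg π), pi_pos, sq_pos_of_pos pi_pos]
  have hπ : π ^ 2 ≤ lam := by simpa using hn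
  obtain ⟨g, hg, hcoef, hbound⟩ := h.exists_contDiff_coef_one_eq hR hπ
  refine ⟨g, hg, by simpa using hcoef, fun l x _ => ?_⟩
  simpa [sqrt_eq_zero_of_nonpos (sub_nonpos.2 hπ)] using hbound l x

end IsArmEigenfunction

/-! ### Pointwise convergence of sine series -/

/-- The odd extension of the restriction of `f` to `(-∞, 0]`. -/
def oddExt (f : ℝ → ℝ) (t : ℝ) : ℝ := if t ≤ 0 then f t else -f (-t)

theorem oddExt_of_nonpos (f : ℝ → ℝ) {t : ℝ} (ht : t ≤ 0) : oddExt f t = f t := if_pos ht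

theorem oddExt_of_nonneg {f : ℝ → ℝ} (hf : f 0 = 0) {t : ℝ} (ht : 0 ≤ t) :
    oddExt f t = -f (-t) := by
  rcases ht.eq_or_lt with rfl | ht
  · simp [oddExt, hf]
  · exact if_neg ht.not_ge

theorem continuousOn_oddExt {f : ℝ → ℝ} {L : ℝ} (hf : ContinuousOn f (Icc (-L) 0)) (hf0 : f 0 = 0) :
    ContinuousOn (oddExt f) (Icc (-L) L) := by
  refine (ContinuousOn.union_of_isClosed (s := Icc (-L) 0) (t := Icc 0 L) ?_ ?_ isClosed_Icc
    isClosed_Icc).mono fun t ht => (le_total t 0).imp (fun h => ⟨ht.1, h⟩) fun h => ⟨h, ht.2⟩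
  · exact hf.congr fun t ht => oddExt_of_nonpos f ht.2
  · refine ContinuousOn.congr (f := fun t => -f (-t)) ?_ fun t ht => oddExt_of_nonneg hf0 ht.1
    exact (hf.comp (by fun_prop) fun t ht => ⟨neg_le_neg ht.2, neg_nonpos.2 ht.1⟩).neg

theorem integral_neg_self_eq_integral_add_comp_neg {g : ℝ → ℂ} {L : ℝ} (hL : 0 ≤ L)
    (hg : ContinuousOn g (Icc (-L) L)) :
    ∫ t in -L..L, g t = ∫ t in -L..0, (g t + g (-t)) := by
  have hleft : ContinuousOn g (Icc (-L) 0) := hg.mono (Icc_subset_Icc_right hL)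
  have hright : ContinuousOn (fun t => g (-t)) (Icc (-L) 0) :=
    hg.comp (by fun_prop) fun t ht => ⟨by linarith [ht.2], by linarith [ht.1]⟩
  rw [intervalIntegral.integral_add (hleft.intervalIntegrable_of_Icc (by simpa using hL))
    (hright.intervalIntegrable_of_Icc (by simpa using hL)), intervalIntegral.integral_comp_neg,
    neg_zero, neg_neg, intervalIntegral.integral_add_adjacent_intervals
    (hleft.intervalIntegrable_of_Icc (by simpa using hL))
    ((hg.mono (Icc_subset_Icc_left (by simpa using hL))).intervalIntegrable_of_Icc hL)]

theorem fourierCoeff_liftIco_oddExt {f : ℝ → ℝ} {L : ℝ} [Fact (0 < 2 * L)]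
    (hf : ContinuousOn f (Icc (-L) 0)) (hf0 : f 0 = 0) (n : ℤ) :
    fourierCoeff (AddCircle.liftIco (2 * L) (-L) fun t => (oddExt f t : ℂ)) n =
      -(Complex.I / L) * ((∫ t in -L..0, f t * sin (n * π / L * t) : ℝ) : ℂ) := by
  have hL : 0 < L := by linarith [Fact.out (p := 0 < 2 * L)]
  have hLc : (L : ℂ) ≠ 0 := Complex.ofReal_ne_zero.2 hL.ne'
  set g : ℝ → ℂ := fun t => Complex.exp (-(n * π / L * t : ℝ) * Complex.I) * oddExt f t with hg_def
  have hg : ContinuousOn g (Icc (-L) L) := by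
    have := continuousOn_oddExt hf hf0
    fun_prop
  have hcoeff : ∫ t in -L..-L + 2 * L, fourier (-n) (t : AddCircle (2 * L)) •
      AddCircle.liftIco (2 * L) (-L) (fun t => (oddExt f t : ℂ)) t = ∫ t in -L..L, g t := by
    rw [show -L + 2 * L = L by ring]
    refine intervalIntegral.integral_congr_Ioo_of_le (by linarith) fun t ht => ?_
    simp only [smul_eq_mul]
    rw [AddCircle.liftIco_coe_apply ⟨ht.1.le, by linarith [ht.2]⟩, fourier_coe_apply, hg_def]
    congr 2
    push_cast
    field_simp
  rw [fourierCoeff_eq_intervalIntegral _ _ (-L), hcoeff,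
    integral_neg_self_eq_integral_add_comp_neg hL.le hg, ← intervalIntegral.integral_ofReal,
    ← intervalIntegral.integral_const_mul, ← intervalIntegral.integral_smul]
  refine intervalIntegral.integral_congr fun t ht => ?_
  rw [uIcc_of_le (by linarith)] at ht
  simp only [hg_def, oddExt_of_nonpos f ht.2, oddExt_of_nonneg hf0 (neg_nonneg.2 ht.2), neg_neg,
    Complex.real_smul, Complex.ofReal_mul, Complex.ofReal_sin, Complex.sin]
  push_cast
  field_simp
  ring_nf
  rw [Complex.I_sq]
  ring

theorem continuous_liftIco_oddExt {f : ℝ → ℝ} {L : ℝ} [Fact (0 < 2 * L)]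
    (hf : ContinuousOn f (Icc (-L) 0)) (hf0 : f 0 = 0) (hfL : f (-L) = 0) :
    Continuous (AddCircle.liftIco (2 * L) (-L) fun t => (oddExt f t : ℂ)) := by
  have hL : 0 < L := by linarith [Fact.out (p := 0 < 2 * L)]
  have hend : -L + 2 * L = L := by ring
  refine AddCircle.liftIco_continuous ?_ ?_ <;> rw [hend]
  · rw [oddExt_of_nonpos f (by linarith), oddExt_of_nonneg hf0 hL.le, hfL, neg_zero]
  · exact Complex.continuous_ofReal.comp_continuousOn (continuousOn_oddExt hf hf0)

theorem hasSum_sine_series {f : ℝ → ℝ} {L : ℝ} (hL : 0 < L) (hf : ContinuousOn f (Icc (-L) 0))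
    (hf0 : f 0 = 0) (hfL : f (-L) = 0)
    (hsum : Summable fun k : ℕ => ∫ t in -L..0, f t * sin (k * π / L * t)) {t : ℝ}
    (ht : t ∈ Icc (-L) 0) :
    HasSum (fun n : ℕ => 2 / L * (∫ s in -L..0, f s * sin ((n + 1 : ℕ) * π / L * s)) *
      sin ((n + 1 : ℕ) * π / L * t)) (f t) := by
  have : Fact (0 < 2 * L) := ⟨by positivity⟩
  have hLc : (L : ℂ) ≠ 0 := Complex.ofReal_ne_zero.2 hL.ne'
  set b : ℤ → ℝ := fun n => ∫ t in -L..0, f t * sin (n * π / L * t) with hb_def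
  have hb_neg : ∀ n, b (-n) = -b n := fun n => by simp [hb_def, neg_mul, neg_div]
  have hcoeff : ∀ n, fourierCoeff (AddCircle.liftIco (2 * L) (-L) fun t => (oddExt f t : ℂ)) n =
      -(Complex.I / L) * b n := fourierCoeff_liftIco_oddExt hf hf0
  have hsummable : Summable fun n : ℤ => -(Complex.I / L) * (b n : ℂ) := by
    have hnat : Summable fun k : ℕ => (b k : ℂ) := by
      simpa only [hb_def, Int.cast_natCast] using Complex.summable_ofReal.2 hsum
    refine Summable.mul_left _ (.of_nat_of_neg hnat (hnat.neg.congr fun k => ?_))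
    rw [hb_neg, Complex.ofReal_neg]
  rw [← funext hcoeff] at hsummable
  have hfourier := (has_pointwise_sum_fourier_series_of_summable
    (f := ⟨_, continuous_liftIco_oddExt hf hf0 hfL⟩) hsummable (t : AddCircle (2 * L))).nat_add_neg
  rw [← hasSum_nat_add_iff' 1] at hfourier
  rw [← Complex.hasSum_ofReal]
  convert! hfourier using 1
  · ext n
    simp only [ContinuousMap.coe_mk, hcoeff, hb_neg, fourier_coe_apply, smul_eq_mul]
    rw [show ∫ s in -L..0, f s * sin ((n + 1 : ℕ) * π / L * s) = b (n + 1 : ℕ) by simp [hb_def]]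
    push_cast
    rw [Complex.sin]
    field_simp
    ring_nf
  · have ht' : t ∈ Ico (-L) (-L + 2 * L) := ⟨ht.1, by linarith [ht.2]⟩
    simp [hcoeff, hb_def, AddCircle.liftIco_coe_apply ht', oddExt_of_nonpos f ht.2]

/-! ### Decay of the derivatives on the arm -/

/-- The bound for the `n`-th term of the differentiated sine series of an arm eigenfunction, where
`p` is the total order of differentiation. -/
def modeBound (p n : ℕ) : ℝ := 8 * ((n + 1) * π) ^ p * exp (-(n * (π / 4)))

theorem modeBound_nonneg (p n : ℕ) : 0 ≤ modeBound p n := by unfold modeBound; positivity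

theorem summable_modeBound (p : ℕ) : Summable (modeBound p) := by
  have hsum := (summable_nat_add_iff 1).2
    (Real.summable_pow_mul_exp_neg_nat_mul p (r := π / 4) (by positivity))
  refine (hsum.mul_left (8 * π ^ p * exp (π / 4))).congr fun n => ?_
  have hexp : exp (-(n * (π / 4))) = exp (π / 4) * exp (-(π / 4) * (n + 1 : ℕ)) := by
    rw [← exp_add]
    congr 1
    push_cast
    ring
  rw [modeBound, hexp, mul_pow, Nat.cast_add_one]
  ring

theorem abs_iteratedDeriv_sin_mul_le {a : ℝ} (ha : 0 ≤ a) (m : ℕ) (t : ℝ) :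
    |iteratedDeriv m (fun t => sin (a * t)) t| ≤ a ^ m := by
  rw [iteratedDeriv_comp_const_mul contDiff_sin, abs_mul, abs_of_nonneg (by positivity)]
  exact mul_le_of_le_one_right (by positivity) (abs_iteratedDeriv_sin_le_one _ _)

theorem hasSum_iterate_pd1_iterate_pd2_mul {V : Set (ℝ × ℝ)} {v : ℝ × ℝ → ℝ} {f g : ℕ → ℝ → ℝ}
    {M : ℕ → ℕ → ℕ → ℝ} (hV : IsOpen V) (hv : ContDiffOn ℝ ∞ v V) (hf : ∀ n, ContDiff ℝ ∞ (f n))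
    (hg : ∀ n, ContDiff ℝ ∞ (g n)) (hM : ∀ l m, Summable (M l m))
    (hfgM : ∀ l m n, ∀ p ∈ V, |iteratedDeriv l (f n) p.1 * iteratedDeriv m (g n) p.2| ≤ M l m n)
    (h : ∀ p ∈ V, HasSum (fun n => f n p.1 * g n p.2) (v p)) (l m : ℕ) :
    ∀ p ∈ V, HasSum (fun n => iteratedDeriv l (f n) p.1 * iteratedDeriv m (g n) p.2)
      (pd1^[l] (pd2^[m] v) p) := by
  have hfg : ∀ n, ContDiffOn ℝ ∞ (fun p : ℝ × ℝ => f n p.1 * g n p.2) V := fun n =>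
    (((hf n).comp contDiff_fst).mul ((hg n).comp contDiff_snd)).contDiffOn
  have hderiv : ∀ l m n, (dirDeriv (1, 0))^[l] ((dirDeriv (0, 1))^[m]
      fun p : ℝ × ℝ => f n p.1 * g n p.2) =
        fun p => iteratedDeriv l (f n) p.1 * iteratedDeriv m (g n) p.2 :=
    fun l m n => iterate_pd1_iterate_pd2_mul (hf n) (hg n) l m
  have hsum := hasSum_iterate_dirDeriv_iterate_dirDeriv (e := (1, 0)) (e' := (0, 1)) hV hv hfg hM
    (fun l m n p hp => by rw [hderiv]; exact hfgM l m n p hp) h l m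
  simp only [hderiv] at hsum
  exact hsum

namespace IsArmEigenfunction

variable {R lam : ℝ} {v : ℝ × ℝ → ℝ}

theorem exists_hasSum_modes (h : IsArmEigenfunction R lam v) (hR : 1 ≤ R) (hlam : 0 ≤ lam) :
    ∃ g : ℕ → ℝ → ℝ, (∀ n, ContDiff ℝ ∞ (g n)) ∧
      (∀ l m n, ∀ x ∈ Icc (3 / 4) R, ∀ t,
        |iteratedDeriv l (g n) x * iteratedDeriv m (fun t => sin ((n + 1) * π * t)) t| ≤
          exp (-(√(π ^ 2 - lam) * (x - 3 / 4))) * modeBound (l + m) n) ∧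
      ∀ x ∈ Icc (3 / 4) R, ∀ t ∈ Icc (-1 : ℝ) 0,
        HasSum (fun n => g n x * sin ((n + 1) * π * t)) (v (x, t)) := by
  choose g hg hcoef hbound using h.exists_contDiff_coef_eq hR hlam
  have hterm : ∀ l m n, ∀ x ∈ Icc (3 / 4) R, ∀ t,
      |iteratedDeriv l (fun x => 2 * g n x) x *
        iteratedDeriv m (fun t => sin ((n + 1) * π * t)) t| ≤
          exp (-(√(π ^ 2 - lam) * (x - 3 / 4))) * modeBound (l + m) n := fun l m n x hx t => by
    rw [iteratedDeriv_const_mul_field, abs_mul, abs_mul, abs_two]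
    calc _ ≤ 2 * (4 * ((n + 1) * π) ^ l * (exp (-(√(π ^ 2 - lam) * (x - 3 / 4))) *
          exp (-(n * (π / 4))))) * ((n + 1) * π) ^ m := by
          gcongr
          · exact hbound n l x hx
          · exact abs_iteratedDeriv_sin_mul_le (by positivity) m t
      _ = _ := by rw [modeBound]; ring
  refine ⟨fun n x => 2 * g n x, fun n => contDiff_const.mul (hg n), hterm, fun x hx t ht => ?_⟩
  have hx0 : x ∈ Ioc 0 R := ⟨by linarith [hx.1], hx.2⟩
  have hint : ∀ n : ℕ, ∫ t in (-1 : ℝ)..0, v (x, t) * sin ((n + 1 : ℕ) * π / 1 * t) = g n x :=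
    fun n => by rw [← hcoef n x hx0, coef, div_one]
  have hsummable : Summable fun k : ℕ => ∫ t in (-1 : ℝ)..0, v (x, t) * sin (k * π / 1 * t) := by
    rw [← summable_nat_add_iff 1, funext hint]
    refine .of_norm_bounded ((summable_modeBound 0).mul_left
      (exp (-(√(π ^ 2 - lam) * (x - 3 / 4))))) fun n => ?_
    refine (hbound n 0 x hx).trans ?_
    rw [modeBound, pow_zero, mul_one]
    linarith [mul_pos (exp_pos (-(√(π ^ 2 - lam) * (x - 3 / 4)))) (exp_pos (-(n * (π / 4))))]
  have hseries := hasSum_sine_series one_pos (h.continuousOn_slice (Ioc_subset_Icc_self hx0))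
    (h.top x hx0) (h.bot x hx0) hsummable ht
  simp only [hint] at hseries
  simpa only [div_one, Nat.cast_add_one] using hseries

theorem abs_iterate_pd1_iterate_pd2_le_of_lt (h : IsArmEigenfunction R lam v) (hR : 1 ≤ R)
    (hlam : 0 ≤ lam) (l m : ℕ) {x t : ℝ} (hx : x ∈ Ioo (3 / 4) R) (ht : t ∈ Ioo (-1 : ℝ) 0) :
    |pd1^[l] (pd2^[m] v) (x, t)| ≤
      exp (-(√(π ^ 2 - lam) * (x - 3 / 4))) * ∑' n, modeBound (l + m) n := by
  obtain ⟨g, hg, hbound, hsum⟩ := h.exists_hasSum_modes hR hlam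
  obtain ⟨U, -, hUs, hv⟩ := h.smooth
  have hderiv := hasSum_iterate_pd1_iterate_pd2_mul
    (g := fun n t => sin ((n + 1) * π * t)) (M := fun l m => modeBound (l + m))
    ((isOpen_Ioo (a := 3 / 4) (b := R)).prod (isOpen_Ioo (a := -1) (b := 0)))
    (hv.mono fun p hp => hUs ⟨⟨by linarith [hp.1.1], hp.1.2.le⟩, hp.2⟩) hg
    (fun n => by fun_prop) (fun l m => summable_modeBound _)
    (fun l m n p hp => (hbound l m n p.1 (Ioo_subset_Icc_self hp.1) p.2).trans ?_)
    (fun p hp => hsum p.1 (Ioo_subset_Icc_self hp.1) p.2 (Ioo_subset_Icc_self hp.2)) l m (x, t)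
    ⟨hx, ht⟩
  · rw [← hderiv.tsum_eq, ← Real.norm_eq_abs]
    exact tsum_of_norm_bounded ((summable_modeBound (l + m)).hasSum.mul_left _)
      fun n => hbound l m n x (Ioo_subset_Icc_self hx) t
  · refine mul_le_of_le_one_left (modeBound_nonneg _ _) (exp_le_one_iff.2 (neg_nonpos.2 ?_))
    exact mul_nonneg (sqrt_nonneg _) (sub_nonneg.2 hp.1.1.le)

theorem abs_iterate_pd1_iterate_pd2_le (h : IsArmEigenfunction R lam v) (hR : 1 ≤ R)
    (hlam : 0 ≤ lam) (l m : ℕ) {x t : ℝ} (hx : x ∈ Ioc (3 / 4) R) (ht : t ∈ Ioo (-1 : ℝ) 0) :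
    |pd1^[l] (pd2^[m] v) (x, t)| ≤
      exp (-(√(π ^ 2 - lam) * (x - 3 / 4))) * ∑' n, modeBound (l + m) n := by
  obtain ⟨U, hU, hUs, hv⟩ := h.smooth
  have hcont : ContinuousAt (fun y => |pd1^[l] (pd2^[m] v) (y, t)|) x := by
    have hsmooth := contDiffOn_iterate_dirDeriv hU (1, 0)
      (contDiffOn_iterate_dirDeriv hU (0, 1) hv m) l
    have hp : (x, t) ∈ U := hUs ⟨⟨by linarith [hx.1], hx.2⟩, ht⟩
    exact (hasDerivAt_pd1 (differentiableAt_of_contDiffOn hsmooth hU hp)).continuousAt.abs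
  have hexp : Continuous fun y =>
      exp (-(√(π ^ 2 - lam) * (y - 3 / 4))) * ∑' n, modeBound (l + m) n := by fun_prop
  refine le_of_tendsto_of_tendsto (b := 𝓝[<] x) (hcont.tendsto.mono_left inf_le_left)
    (hexp.continuousAt.tendsto.mono_left inf_le_left) ?_
  filter_upwards [Ioo_mem_nhdsLT hx.1] with y hy using
    h.abs_iterate_pd1_iterate_pd2_le_of_lt hR hlam l m ⟨hy.1, hy.2.trans_le hx.2⟩ ht

theorem sqrt_integral_sq_iterate_pd1_iterate_pd2_le (h : IsArmEigenfunction R lam v) (hR : 1 ≤ R)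
    (hlam : 0 ≤ lam) (l m : ℕ) {x : ℝ} (hx : x ∈ Ioc (3 / 4) R) :
    √(∫ t in Ioo (-1 : ℝ) 0, pd1^[l] (pd2^[m] v) (x, t) ^ 2) ≤
      exp (-(√(π ^ 2 - lam) * (x - 3 / 4))) * ∑' n, modeBound (l + m) n := by
  have hnonneg : 0 ≤ exp (-(√(π ^ 2 - lam) * (x - 3 / 4))) * ∑' n, modeBound (l + m) n :=
    mul_nonneg (exp_pos _).le (tsum_nonneg fun n => modeBound_nonneg _ n)
  refine (sqrt_le_left hnonneg).2 ((le_abs_self _).trans ?_)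
  simpa using norm_setIntegral_le_of_norm_le_const (μ := volume) (s := Ioo (-1 : ℝ) 0) (by simp)
    fun t ht => (norm_pow (pd1^[l] (pd2^[m] v) (x, t)) 2).trans_le
      (pow_le_pow_left₀ (norm_nonneg _) (h.abs_iterate_pd1_iterate_pd2_le hR hlam l m hx ht) 2)

end IsArmEigenfunction

/-! ### Comparison of the two first eigenvalues -/

theorem integrable_sq_of_hasCompactSupport {X : Type*} [TopologicalSpace X] [MeasurableSpace X]
    [OpensMeasurableSpace X] {μ : Measure X} [IsFiniteMeasureOnCompacts μ] {g : X → ℝ}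
    (hg : Continuous g) (hgc : HasCompactSupport g) : Integrable (fun x => g x ^ 2) μ := by
  simp only [pow_two]
  exact (hg.mul hg).integrable_of_hasCompactSupport hgc.mul_left

theorem integrable_mul_of_tsupport_subset {X : Type*} [TopologicalSpace X] [MeasurableSpace X]
    [OpensMeasurableSpace X] {μ : Measure X} [IsFiniteMeasureOnCompacts μ] {s : Set X}
    {f g : X → ℝ} (hs : IsOpen s) (hf : ContinuousOn f s) (hg : ContinuousOn g s)
    (hfc : HasCompactSupport f) (hfs : tsupport f ⊆ s) : Integrable (fun x => f x * g x) μ :=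
  ((hf.mul hg).continuous_of_tsupport_subset hs
    (tsupport_mul_subset_left.trans hfs)).integrable_of_hasCompactSupport hfc.mul_right

theorem hasDerivAt_mul_mul_self_of_riccati {s : Set ℝ} {f q : ℝ → ℝ} {κ : ℝ}
    (hf : Differentiable ℝ f) (hfs : tsupport f ⊆ s)
    (hq : ∀ t ∈ s, HasDerivAt q (-(κ ^ 2 + q t ^ 2)) t) (t : ℝ) :
    HasDerivAt (fun t => f t * (q t * f t))
      (f t * (2 * q t * deriv f t - (κ ^ 2 + q t ^ 2) * f t)) t := by
  by_cases ht : t ∈ tsupport f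
  · have hft := (hf t).hasDerivAt
    convert! hft.mul ((hq t (hfs ht)).mul hft) using 1
    simp only [Pi.mul_apply]
    ring
  · have hzero := notMem_tsupport_iff_eventuallyEq.1 ht
    rw [hzero.eq_of_nhds, Pi.zero_apply, zero_mul]
    refine (hasDerivAt_const t (0 : ℝ)).congr_of_eventuallyEq ?_
    filter_upwards [hzero] with r hr
    simp [hr]

-- The difference of the integrands is `f'² - κ² f² = (f' - q f)² + (q f²)'`.
theorem sq_mul_integral_sq_le_of_riccati {s : Set ℝ} {f q : ℝ → ℝ} {κ : ℝ} (hs : IsOpen s)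
    (hf : ContDiff ℝ 1 f) (hfc : HasCompactSupport f) (hfs : tsupport f ⊆ s)
    (hq : ∀ t ∈ s, HasDerivAt q (-(κ ^ 2 + q t ^ 2)) t) :
    κ ^ 2 * ∫ t, f t ^ 2 ≤ ∫ t, deriv f t ^ 2 := by
  have hf' : Continuous (deriv f) := hf.continuous_deriv le_rfl
  have hqs : ContinuousOn q s := fun t ht => (hq t ht).continuousAt.continuousWithinAt
  have hfs' : ContinuousOn f s := hf.continuous.continuousOn
  have hprim : Integrable fun t => f t * (q t * f t) :=
    integrable_mul_of_tsupport_subset hs hfs' (hqs.mul hfs') hfc hfs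
  have hprim' : Integrable fun t => f t * (2 * q t * deriv f t - (κ ^ 2 + q t ^ 2) * f t) :=
    integrable_mul_of_tsupport_subset hs hfs' (((continuousOn_const.mul hqs).mul
      hf'.continuousOn).sub ((continuousOn_const.add (hqs.pow 2)).mul hfs')) hfc hfs
  have hzero := integral_eq_zero_of_hasDerivAt_of_integrable
    (hasDerivAt_mul_mul_self_of_riccati (hf.differentiable one_ne_zero) hfs hq) hprim' hprim
  have hf_sq := (integrable_sq_of_hasCompactSupport (μ := volume) hf.continuous hfc).const_mul
    (κ ^ 2)
  have hf'_sq := integrable_sq_of_hasCompactSupport (μ := volume) hf' hfc.deriv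
  rw [← sub_nonneg]
  calc (0 : ℝ) ≤ ∫ t, (deriv f t - q t * f t) ^ 2 := integral_nonneg fun t => sq_nonneg _
    _ = ∫ t, (deriv f t ^ 2 - κ ^ 2 * f t ^ 2 -
          f t * (2 * q t * deriv f t - (κ ^ 2 + q t ^ 2) * f t)) := by
        congr with t
        ring
    _ = ∫ t, (deriv f t ^ 2 - κ ^ 2 * f t ^ 2) := by
        refine (integral_sub (hf'_sq.sub hf_sq) hprim').trans ?_
        rw [hzero, sub_zero]
        rfl
    _ = (∫ t, deriv f t ^ 2) - κ ^ 2 * ∫ t, f t ^ 2 := by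
        rw [integral_sub hf'_sq hf_sq, integral_const_mul]

theorem hasDerivAt_mul_cot {κ a t : ℝ} (ht : sin (κ * (t - a)) ≠ 0) :
    HasDerivAt (fun t => κ * cot (κ * (t - a))) (-(κ ^ 2 + (κ * cot (κ * (t - a))) ^ 2)) t := by
  have haff : HasDerivAt (fun t => κ * (t - a)) κ t := by
    simpa using ((hasDerivAt_id t).sub_const a).const_mul κ
  simp only [cot_eq_cos_div_sin]
  convert! (haff.cos.div haff.sin ht).const_mul κ using 1
  field_simp
  ring

theorem sq_pi_div_mul_integral_sq_le {f : ℝ → ℝ} {a b : ℝ} (hf : ContDiff ℝ 1 f)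
    (hfs : tsupport f ⊆ Ioo a b) :
    (π / (b - a)) ^ 2 * ∫ t in Ioo a b, f t ^ 2 ≤ ∫ t in Ioo a b, deriv f t ^ 2 := by
  have hfc : HasCompactSupport f := .of_support_subset_isCompact isCompact_Icc
    ((subset_tsupport f).trans (hfs.trans Ioo_subset_Icc_self))
  have hrestrict : ∀ {g : ℝ → ℝ}, tsupport g ⊆ Ioo a b →
      ∫ t in Ioo a b, g t ^ 2 = ∫ t, g t ^ 2 := fun {g} hg =>
    setIntegral_eq_integral_of_forall_compl_eq_zero fun t ht => by
      rw [image_eq_zero_of_notMem_tsupport fun h => ht (hg h), zero_pow two_ne_zero]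
  rw [hrestrict hfs, hrestrict (tsupport_deriv_subset.trans hfs)]
  refine sq_mul_integral_sq_le_of_riccati
    (q := fun t => π / (b - a) * cot (π / (b - a) * (t - a))) isOpen_Ioo hf hfc hfs fun t ht => ?_
  have hab : 0 < b - a := sub_pos.2 (ht.1.trans ht.2)
  refine hasDerivAt_mul_cot (sin_pos_of_pos_of_lt_pi
    (mul_pos (div_pos pi_pos hab) (sub_pos.2 ht.1)) ?_).ne'
  rw [div_mul_eq_mul_div, div_lt_iff₀ hab]
  gcongr
  exact ht.2

theorem integrable_sq_fderiv_apply {E : Type*} [NormedAddCommGroup E] [NormedSpace ℝ E]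
    [MeasurableSpace E] [OpensMeasurableSpace E] {μ : Measure E} [IsFiniteMeasureOnCompacts μ]
    {u : E → ℝ} (hu : ContDiff ℝ 1 u) (huc : HasCompactSupport u) (e : E) :
    Integrable (fun p => fderiv ℝ u p e ^ 2) μ :=
  integrable_sq_of_hasCompactSupport ((hu.continuous_fderiv one_ne_zero).clm_apply
    continuous_const) (huc.fderiv_apply ℝ e)

theorem integrable_gradSq2 {u : ℝ × ℝ → ℝ} (hu : ContDiff ℝ 1 u) (huc : HasCompactSupport u) :
    Integrable (gradSq2 u) :=
  (integrable_sq_fderiv_apply hu huc (1, 0)).add (integrable_sq_fderiv_apply hu huc (0, 1))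

theorem gradSq2_nonneg (u : ℝ × ℝ → ℝ) (p : ℝ × ℝ) : 0 ≤ gradSq2 u p :=
  add_nonneg (sq_nonneg _) (sq_nonneg _)

theorem gradSq2_comp_swap (u : ℝ × ℝ → ℝ) :
    gradSq2 (u ∘ Prod.swap) = gradSq2 u ∘ Prod.swap := by
  ext p
  have h₁ : pd1 (u ∘ Prod.swap) p = pd2 u p.swap := congrFun (iterate_pd1_comp_swap u 1) p
  have h₂ : pd2 (u ∘ Prod.swap) p = pd1 u p.swap := congrFun (iterate_pd2_comp_swap u 1) p
  calc gradSq2 (u ∘ Prod.swap) p = pd2 u p.swap ^ 2 + pd1 u p.swap ^ 2 := by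
        rw [← h₁, ← h₂]
        rfl
    _ = gradSq2 u p.swap := add_comm _ _

theorem sq_pi_div_mul_setIntegral_prod_sq_le {u : ℝ × ℝ → ℝ} {s : Set ℝ} {a b : ℝ}
    (hu : ContDiff ℝ 1 u) (huc : HasCompactSupport u) (hs : MeasurableSet s)
    (hus : ∀ x ∈ s, ∀ t, (x, t) ∈ tsupport u → t ∈ Ioo a b) :
    (π / (b - a)) ^ 2 * ∫ p in s ×ˢ Ioo a b, u p ^ 2 ≤ ∫ p in s ×ˢ Ioo a b, gradSq2 u p := by
  have hiter : ∀ {F : ℝ × ℝ → ℝ}, Integrable F →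
      IntegrableOn (fun x => ∫ t in Ioo a b, F (x, t)) s := fun hF => by
    have hF' := hF.integrableOn (s := s ×ˢ Ioo a b)
    rw [IntegrableOn, Measure.volume_eq_prod, ← Measure.prod_restrict] at hF'
    exact hF'.integral_prod_left
  have hsq := integrable_sq_of_hasCompactSupport (μ := volume) hu.continuous huc
  have hpd2 : Integrable fun p => pd2 u p ^ 2 := integrable_sq_fderiv_apply hu huc (0, 1)
  have hslice : ∀ x ∈ s, (π / (b - a)) ^ 2 * ∫ t in Ioo a b, u (x, t) ^ 2 ≤
      ∫ t in Ioo a b, pd2 u (x, t) ^ 2 := fun x hx => by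
    have hderiv : ∀ t, deriv (fun t => u (x, t)) t = pd2 u (x, t) := fun t =>
      (hasDerivAt_pd2 (hu.differentiable one_ne_zero (x, t))).deriv
    simp only [← hderiv]
    exact sq_pi_div_mul_integral_sq_le (hu.comp (by fun_prop)) fun t ht =>
      hus x hx t (tsupport_comp_subset_preimage (f := fun t => (x, t)) u (by fun_prop) ht)
  calc (π / (b - a)) ^ 2 * ∫ p in s ×ˢ Ioo a b, u p ^ 2
      = ∫ x in s, (π / (b - a)) ^ 2 * ∫ t in Ioo a b, u (x, t) ^ 2 := by
        rw [integral_const_mul, Measure.volume_eq_prod, setIntegral_prod _ hsq.integrableOn]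
    _ ≤ ∫ x in s, ∫ t in Ioo a b, pd2 u (x, t) ^ 2 :=
        setIntegral_mono_on ((hiter hsq).const_mul _) (hiter hpd2) hs hslice
    _ = ∫ p in s ×ˢ Ioo a b, pd2 u p ^ 2 := by
        rw [Measure.volume_eq_prod, setIntegral_prod _ hpd2.integrableOn]
    _ ≤ ∫ p in s ×ˢ Ioo a b, gradSq2 u p :=
        setIntegral_mono hpd2.integrableOn (integrable_gradSq2 hu huc).integrableOn fun p =>
          le_add_of_nonneg_left (sq_nonneg _)

theorem sq_pi_div_mul_setIntegral_prod_sq_le' {u : ℝ × ℝ → ℝ} {s : Set ℝ} {a b : ℝ}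
    (hu : ContDiff ℝ 1 u) (huc : HasCompactSupport u) (hs : MeasurableSet s)
    (hus : ∀ x ∈ s, ∀ t, (t, x) ∈ tsupport u → t ∈ Ioo a b) :
    (π / (b - a)) ^ 2 * ∫ p in Ioo a b ×ˢ s, u p ^ 2 ≤ ∫ p in Ioo a b ×ˢ s, gradSq2 u p := by
  have h := sq_pi_div_mul_setIntegral_prod_sq_le (u := u ∘ Prod.swap)
    (hu.comp (contDiff_snd.prodMk contDiff_fst))
    (huc.comp_homeomorph (Homeomorph.prodComm ℝ ℝ)) hs fun x hx t ht =>
      hus x hx t (tsupport_comp_subset_preimage u continuous_swap ht)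
  rw [gradSq2_comp_swap] at h
  simpa only [Measure.volume_eq_prod, Function.comp_apply,
    setIntegral_prod_swap (f := fun p => u p ^ 2), setIntegral_prod_swap (f := gradSq2 u)] using h

theorem isOpen_Gam : IsOpen Gam :=
  (isOpen_lt continuous_const (continuous_fst.min continuous_snd)).inter
    (isOpen_lt (continuous_fst.min continuous_snd) continuous_const)

theorem isOpen_Box (L : ℝ) : IsOpen (Box L) :=
  (isOpen_lt (continuous_fst.add_const 1).abs continuous_const).inter
    (isOpen_lt (continuous_snd.add_const 1).abs continuous_const)

theorem isOpen_GamR (R : ℝ) : IsOpen (GamR R) := isOpen_Gam.inter (isOpen_Box _)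

theorem mem_Gam_iff {x y : ℝ} : (x, y) ∈ Gam ↔ (-1 < x ∧ -1 < y) ∧ (x < 0 ∨ y < 0) := by
  simp only [Gam, mem_ofPred_eq, lt_min_iff, min_lt_iff]

theorem mem_GamR_iff {R x y : ℝ} : (x, y) ∈ GamR R ↔ (x, y) ∈ Gam ∧ x < R ∧ y < R := by
  simp only [GamR, Box, mem_inter_iff, mem_ofPred_eq, abs_lt, mem_Gam_iff]
  constructor
  · rintro ⟨h, hx, hy⟩
    exact ⟨h, by linarith, by linarith⟩
  · rintro ⟨h, hx, hy⟩
    exact ⟨h, ⟨by linarith [h.1.1], by linarith⟩, by linarith [h.1.2], by linarith⟩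

theorem disjoint_Gam_DirB (R : ℝ) : Disjoint Gam (DirB R) := by
  refine disjoint_left.2 fun p hp hpD => ?_
  have hclosure : p ∈ closure (Box (R + 1)) := closure_mono inter_subset_right hpD.1.1
  by_cases hB : p ∈ Box (R + 1)
  · exact hpD.1.2 ((isOpen_GamR R).interior_eq.symm ▸ ⟨hp, hB⟩)
  · exact hpD.2 ⟨hpD.1, hclosure, (isOpen_Box _).interior_eq.symm ▸ hB⟩

theorem Gam_sdiff_GamR {R : ℝ} (hR : 0 ≤ R) :
    Gam \ GamR R = Ici R ×ˢ Ioo (-1) 0 ∪ Ioo (-1) 0 ×ˢ Ici R := by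
  ext ⟨x, y⟩
  simp only [Set.mem_sdiff, mem_GamR_iff, mem_Gam_iff, mem_union, mem_prod, mem_Ici, mem_Ioo]
  grind

theorem sq_pi_mul_setIntegral_Gam_sdiff_GamR_le {R : ℝ} (hR : 0 ≤ R) {u : ℝ × ℝ → ℝ}
    (hu : ContDiff ℝ 1 u) (huc : HasCompactSupport u) (hus : tsupport u ⊆ Gam) :
    π ^ 2 * ∫ p in Gam \ GamR R, u p ^ 2 ≤ ∫ p in Gam \ GamR R, gradSq2 u p := by
  have hsq := integrable_sq_of_hasCompactSupport (μ := volume) hu.continuous huc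
  have hgrad := integrable_gradSq2 hu huc
  have hdisj : Disjoint (Ici R ×ˢ Ioo (-1 : ℝ) 0) (Ioo (-1 : ℝ) 0 ×ˢ Ici R) :=
    disjoint_left.2 fun p hp hp' => (hR.trans hp.1).not_gt hp'.1.2
  have hmeas : MeasurableSet (Ioo (-1 : ℝ) 0 ×ˢ Ici R) := measurableSet_Ioo.prod measurableSet_Ici
  have h₁ := sq_pi_div_mul_setIntegral_prod_sq_le (a := -1) (b := 0) hu huc
    (measurableSet_Ici (a := R)) fun x hx t ht => by
      have := mem_Gam_iff.1 (hus ht)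
      exact ⟨this.1.2, this.2.resolve_left (hR.trans hx).not_gt⟩
  have h₂ := sq_pi_div_mul_setIntegral_prod_sq_le' (a := -1) (b := 0) hu huc
    (measurableSet_Ici (a := R)) fun x hx t ht => by
      have := mem_Gam_iff.1 (hus ht)
      exact ⟨this.1.1, this.2.resolve_right (hR.trans hx).not_gt⟩
  rw [zero_sub, neg_neg, div_one] at h₁ h₂
  rw [Gam_sdiff_GamR hR, setIntegral_union hdisj hmeas hsq.integrableOn hsq.integrableOn,
    setIntegral_union hdisj hmeas hgrad.integrableOn hgrad.integrableOn, mul_add]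
  exact add_le_add h₁ h₂

theorem setIntegral_gradSq2_div_nonneg (s : Set (ℝ × ℝ)) (u : ℝ × ℝ → ℝ) :
    0 ≤ (∫ p in s, gradSq2 u p) / ∫ p in s, u p ^ 2 :=
  div_nonneg (integral_nonneg (gradSq2_nonneg u)) (integral_nonneg fun _ => sq_nonneg _)

theorem lamR_nonneg (R : ℝ) : 0 ≤ lamR R :=
  Real.sInf_nonneg fun _ ⟨u, _, _, hr⟩ => hr ▸ setIntegral_gradSq2_div_nonneg _ u

theorem lamR_mul_setIntegral_sq_le {R : ℝ} {u : ℝ × ℝ → ℝ} (hu : AdmR R u) :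
    lamR R * ∫ p in GamR R, u p ^ 2 ≤ ∫ p in GamR R, gradSq2 u p := by
  have hsq : 0 ≤ ∫ p in GamR R, u p ^ 2 := integral_nonneg fun p => sq_nonneg _
  rcases hsq.eq_or_lt with h | h
  · rw [← h, mul_zero]
    exact integral_nonneg (gradSq2_nonneg u)
  · exact (le_div_iff₀ h).1 (csInf_le
      ⟨0, fun _ ⟨w, _, _, hr⟩ => hr ▸ setIntegral_gradSq2_div_nonneg _ w⟩ ⟨u, hu, h.ne', rfl⟩)

theorem admR_of_tsupport_subset {u : ℝ × ℝ → ℝ} (hu : ContDiff ℝ 1 u) (hus : tsupport u ⊆ Gam)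
    (R : ℝ) : AdmR R u :=
  ⟨hu, fun _ hp => image_eq_zero_of_notMem_tsupport fun h =>
    disjoint_left.1 (disjoint_Gam_DirB R) (hus h) hp⟩

theorem exists_contDiff_tsupport_subset_setIntegral_sq_ne_zero {E : Type*}
    [NormedAddCommGroup E] [NormedSpace ℝ E] [FiniteDimensional ℝ E] [MeasurableSpace E]
    [BorelSpace E] {μ : Measure E} [IsFiniteMeasureOnCompacts μ] [μ.IsOpenPosMeasure] {s : Set E}
    (hs : IsOpen s) (hne : s.Nonempty) {n : ℕ∞} :
    ∃ u : E → ℝ, ContDiff ℝ n u ∧ HasCompactSupport u ∧ tsupport u ⊆ s ∧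
      ∫ p in s, u p ^ 2 ∂μ ≠ 0 := by
  obtain ⟨q, hq⟩ := hne
  obtain ⟨u, hus, huc, hu, -, huq⟩ := exists_contDiff_tsupport_subset (n := n) (hs.mem_nhds hq)
  refine ⟨u, hu, huc, hus, ?_⟩
  rw [setIntegral_eq_integral_of_forall_compl_eq_zero fun p hp => by
    rw [image_eq_zero_of_notMem_tsupport fun h => hp (hus h), zero_pow two_ne_zero]]
  have hpos : 0 < ∫ p, u p * u p ∂μ :=
    (hu.continuous.mul hu.continuous).integral_pos_of_hasCompactSupport_nonneg_nonzero (x := q)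
      huc.mul_left (fun p => mul_self_nonneg _) (by simp [huq])
  simpa only [pow_two] using hpos.ne'

theorem min_lamR_sq_pi_le_lamG {R : ℝ} (hR : 0 ≤ R) : min (lamR R) (π ^ 2) ≤ lamG := by
  refine le_csInf ?_ ?_
  · obtain ⟨u, hu, huc, hus, hu0⟩ := exists_contDiff_tsupport_subset_setIntegral_sq_ne_zero
      (μ := volume) (n := 1) isOpen_Gam ⟨(-1 / 2, -1 / 2), by norm_num [Gam]⟩
    exact ⟨_, u, hu, huc, hus, hu0, rfl⟩
  rintro r ⟨u, hu, huc, hus, hu0, rfl⟩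
  have hsplit : ∀ {F : ℝ × ℝ → ℝ}, Integrable F →
      (∫ p in GamR R, F p) + ∫ p in Gam \ GamR R, F p = ∫ p in Gam, F p := fun hF => by
    rw [← setIntegral_union disjoint_sdiff_right
      (isOpen_Gam.measurableSet.diff (isOpen_GamR R).measurableSet) hF.integrableOn
      hF.integrableOn, union_sdiff_cancel (show GamR R ⊆ Gam from inter_subset_left)]
  have hnonneg : ∀ s : Set (ℝ × ℝ), 0 ≤ ∫ p in s, u p ^ 2 := fun s =>
    integral_nonneg fun p => sq_nonneg _
  rw [le_div_iff₀ ((hnonneg Gam).lt_of_ne' hu0), ← hsplit (integrable_gradSq2 hu huc),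
    ← hsplit (integrable_sq_of_hasCompactSupport hu.continuous huc), mul_add]
  exact add_le_add
    ((mul_le_mul_of_nonneg_right (min_le_left _ _) (hnonneg _)).trans
      (lamR_mul_setIntegral_sq_le (admR_of_tsupport_subset hu hus R)))
    ((mul_le_mul_of_nonneg_right (min_le_right _ _) (hnonneg _)).trans
      (sq_pi_mul_setIntegral_Gam_sdiff_GamR_le hR hu huc hus))

theorem omega_le_sqrt_sq_pi_sub_lamR {R : ℝ} (hR : 0 ≤ R) : omega ≤ √(π ^ 2 - lamR R) := by
  rcases min_le_iff.1 (min_lamR_sq_pi_le_lamG hR) with h | h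
  · exact sqrt_le_sqrt (sub_le_sub_left h _)
  · rw [omega, sqrt_eq_zero_of_nonpos (sub_nonpos.2 h)]
    exact sqrt_nonneg _

/-! ### Restriction of the eigenfunction to an arm -/

theorem Ioo_prod_Ioo_subset_GamR (R : ℝ) : Ioo 0 R ×ˢ Ioo (-1) 0 ⊆ GamR R := by
  rintro ⟨x, t⟩ ⟨hx, ht⟩
  rw [mem_GamR_iff, mem_Gam_iff]
  exact ⟨⟨⟨by linarith [hx.1], ht.1⟩, .inr ht.2⟩, hx.2, by linarith [hx.1, hx.2, ht.2]⟩

theorem Icc_prod_Icc_subset_closure_GamR {R : ℝ} (hR : 0 < R) :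
    Icc 0 R ×ˢ Icc (-1) 0 ⊆ closure (GamR R) := by
  rw [← closure_Ioo hR.ne, ← closure_Ioo (show (-1 : ℝ) ≠ 0 by norm_num), ← closure_prod_eq]
  exact closure_mono (Ioo_prod_Ioo_subset_GamR R)

theorem Ioo_prod_subset_DirB (R : ℝ) : Ioo 0 R ×ˢ {-1, 0} ⊆ DirB R := by
  rintro ⟨x, t⟩ ⟨hx, ht⟩
  have htI : t ∈ Icc (-1 : ℝ) 0 := by rcases ht with rfl | rfl <;> norm_num
  have hGam : (x, t) ∉ GamR R := by
    rw [mem_GamR_iff, mem_Gam_iff]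
    grind
  have hBox : (x, t) ∈ Box (R + 1) := by
    simp only [Box, mem_ofPred_eq, abs_lt]
    grind
  have hclosure := Icc_prod_Icc_subset_closure_GamR (hx.1.trans hx.2)
    (mk_mem_prod (Ioo_subset_Icc_self hx) htI)
  refine ⟨⟨hclosure, by rwa [(isOpen_GamR R).interior_eq]⟩, fun h => h.2.2 ?_⟩
  rwa [(isOpen_Box _).interior_eq]

theorem IsFirstEF.eq_zero_of_mem_Icc {R : ℝ} {v : ℝ × ℝ → ℝ} (h : IsFirstEF R v) (hR : 0 < R)
    {x t : ℝ} (hx : x ∈ Icc 0 R) (ht : t ∈ ({-1, 0} : Set ℝ)) : v (x, t) = 0 := by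
  obtain ⟨-, hcont, hdir, -⟩ := h
  have htI : t ∈ Icc (-1 : ℝ) 0 := by rcases ht with rfl | rfl <;> norm_num
  have hzero : EqOn (fun y => v (y, t)) (fun _ => 0) (Ioo 0 R) := fun y hy =>
    hdir _ (Ioo_prod_subset_DirB R ⟨hy, ht⟩)
  exact hzero.of_subset_closure
    (hcont.comp (by fun_prop) fun y hy => Icc_prod_Icc_subset_closure_GamR hR ⟨hy, htI⟩)
    continuousOn_const Ioo_subset_Icc_self (closure_Ioo hR.ne).ge hx

theorem IsFirstEF.isArmEigenfunction {R : ℝ} {v : ℝ × ℝ → ℝ} (h : IsFirstEF R v) (hR : 0 < R) :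
    IsArmEigenfunction R (lamR R) v := by
  have hside : ∀ x ∈ Ioc 0 R, ∀ t ∈ ({-1, 0} : Set ℝ), v (x, t) = 0 := fun x hx t ht =>
    h.eq_zero_of_mem_Icc hR (Ioc_subset_Icc_self hx) ht
  have harm := Ioo_prod_Ioo_subset_GamR R
  obtain ⟨⟨U, hU, hUs, hv⟩, hcont, -, hneu, -, hpde, hpos, hmass⟩ := h
  -- otherwise the integral of `v²` would be `0`
  have hint : IntegrableOn (fun p => v p ^ 2) (GamR R) :=
    not_imp_comm.1 integral_undef (hmass.trans_ne one_ne_zero)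
  refine
    { smooth := ⟨U, hU, fun p hp => hUs ?_, hv⟩
      cont := hcont.mono (Icc_prod_Icc_subset_closure_GamR hR)
      bot := fun x hx => hside x hx _ (by simp)
      top := fun x hx => hside x hx _ (by simp)
      neu := hneu
      pde := fun x hx t ht => ?_
      pos := fun x hx t ht => hpos _ (harm ⟨hx, ht⟩)
      mass := (setIntegral_mono_set hint (ae_of_all _ fun p => sq_nonneg _)
        harm.eventuallyLE).trans_eq hmass }
  · rcases hp.1.2.lt_or_eq with hlt | heq
    · exact .inl (harm ⟨⟨hp.1.1, hlt⟩, hp.2⟩)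
    · exact .inr (.inl ⟨heq, hp.2⟩)
  · rw [neg_mul, ← hpde _ (harm ⟨hx, ht⟩), neg_neg]
    rfl

theorem swap_preimage_GamR (R : ℝ) : Prod.swap ⁻¹' GamR R = GamR R := by
  ext ⟨x, y⟩
  simp only [mem_preimage, Prod.swap_prod_mk, mem_GamR_iff, mem_Gam_iff]
  tauto

theorem swap_preimage_Box (L : ℝ) : Prod.swap ⁻¹' Box L = Box L :=
  ext fun _ => and_comm

theorem swap_preimage_DirB (R : ℝ) : Prod.swap ⁻¹' DirB R = DirB R := by
  have hfrontier : ∀ s : Set (ℝ × ℝ), Prod.swap ⁻¹' frontier s = frontier (Prod.swap ⁻¹' s) :=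
    (Homeomorph.prodComm ℝ ℝ).preimage_frontier
  rw [DirB, Sig, preimage_sdiff, preimage_inter, hfrontier, hfrontier, swap_preimage_Box,
    swap_preimage_GamR]

theorem lap2_comp_swap (u : ℝ × ℝ → ℝ) : lap2 (u ∘ Prod.swap) = lap2 u ∘ Prod.swap := by
  ext p
  have h₁ : pd1 (pd1 (u ∘ Prod.swap)) p = pd2 (pd2 u) p.swap :=
    congrFun (iterate_pd1_comp_swap u 2) p
  have h₂ : pd2 (pd2 (u ∘ Prod.swap)) p = pd1 (pd1 u) p.swap :=
    congrFun (iterate_pd2_comp_swap u 2) p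
  rw [lap2, h₁, h₂, add_comm]
  rfl

theorem IsFirstEF.comp_swap {R : ℝ} {v : ℝ × ℝ → ℝ} (h : IsFirstEF R v) :
    IsFirstEF R (v ∘ Prod.swap) := by
  obtain ⟨⟨U, hU, hUs, hv⟩, hcont, hdir, hneu₁, hneu₂, hpde, hpos, hmass⟩ := h
  have hGam : MapsTo Prod.swap (GamR R) (GamR R) := (swap_preimage_GamR R).ge
  have hpd1 : pd1 (v ∘ Prod.swap) = pd2 v ∘ Prod.swap := iterate_pd1_comp_swap v 1
  have hpd2 : pd2 (v ∘ Prod.swap) = pd1 v ∘ Prod.swap := iterate_pd2_comp_swap v 1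
  refine ⟨⟨Prod.swap ⁻¹' U, hU.preimage continuous_swap, ?_, ?_⟩, ?_,
    fun p hp => hdir _ ((swap_preimage_DirB R).ge hp), fun t ht => ?_, fun t ht => ?_,
    fun p hp => ?_, fun p hp => hpos _ (hGam hp), ?_⟩
  · rintro p (hp | hp | hp)
    · exact hUs (.inl (hGam hp))
    · exact hUs (.inr (.inr hp.symm))
    · exact hUs (.inr (.inl hp.symm))
  · exact hv.comp (contDiff_snd.prodMk contDiff_fst).contDiffOn fun p hp => hp
  · exact hcont.comp continuous_swap.continuousOn (hGam.closure continuous_swap)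
  · rw [hpd1]
    exact hneu₂ t ht
  · rw [hpd2]
    exact hneu₁ t ht
  · rw [lap2_comp_swap]
    exact hpde _ (hGam hp)
  · have := (Measure.measurePreserving_swap (μ := (volume : Measure ℝ))
      (ν := (volume : Measure ℝ))).setIntegral_preimage_emb
      (MeasurableEquiv.prodComm (α := ℝ) (β := ℝ)).measurableEmbedding (fun p => v p ^ 2) (GamR R)
    rw [swap_preimage_GamR] at this
    exact this.trans hmass

theorem IsFirstEF.sqrt_integral_sq_iterate_pd1_iterate_pd2_le {R : ℝ} {v : ℝ × ℝ → ℝ}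
    (h : IsFirstEF R v) (hR : 1 ≤ R) (l m : ℕ) {ρ : ℝ} (hρ : ρ ∈ Icc 1 R) :
    √(∫ t in II, pd1^[l] (pd2^[m] v) (ρ, t) ^ 2) ≤
      exp (omega * (3 / 4)) * (∑' n, modeBound (l + m) n) * exp (-ρ * omega) := by
  have hR₀ : 0 < R := one_pos.trans_le hR
  calc √(∫ t in II, pd1^[l] (pd2^[m] v) (ρ, t) ^ 2)
      ≤ exp (-(√(π ^ 2 - lamR R) * (ρ - 3 / 4))) * ∑' n, modeBound (l + m) n :=
        (h.isArmEigenfunction hR₀).sqrt_integral_sq_iterate_pd1_iterate_pd2_le hR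
          (lamR_nonneg R) l m ⟨by linarith [hρ.1], hρ.2⟩
    _ ≤ exp (-(omega * (ρ - 3 / 4))) * ∑' n, modeBound (l + m) n := by
        gcongr
        · exact tsum_nonneg (modeBound_nonneg _)
        · linarith [hρ.1]
        · exact omega_le_sqrt_sq_pi_sub_lamR hR₀.le
    _ = exp (omega * (3 / 4)) * (∑' n, modeBound (l + m) n) * exp (-ρ * omega) := by
        rw [mul_right_comm, ← exp_add]
        ring_nf

/-- Lemma 2.3: uniform exponential decay estimates for all derivatives
of the first eigenfunction `v_R`. For all `ℓ, m ≥ 0` there is a constant `C_{ℓ,m}`,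
independent of `R` and `ρ`, such that for all `R ≥ 1`, all `ρ ∈ [1,R]` and the first
eigenfunction `v_R`, one has `‖∂₁^ℓ ∂₂^m v_R‖_{L²(Σ_ρ¹)} ≤ C_{ℓ,m} e^{-ρω}` and
`‖∂₂^ℓ ∂₁^m v_R‖_{L²(Σ_ρ²)} ≤ C_{ℓ,m} e^{-ρω}`, with `ω = √(π² - λ₁(Γ))`. -/
theorem eigenfunction_decay :
    ∀ ℓ m : ℕ, ∃ C : ℝ, ∀ R : ℝ, 1 ≤ R → ∀ ρ ∈ Set.Icc (1 : ℝ) R,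
      ∀ v : ℝ × ℝ → ℝ, IsFirstEF R v →
        Real.sqrt (∫ t in II, ((pd1^[ℓ] (pd2^[m] v)) (ρ, t)) ^ 2) ≤
          C * Real.exp (-ρ * omega) ∧
        Real.sqrt (∫ t in II, ((pd2^[ℓ] (pd1^[m] v)) (t, ρ)) ^ 2) ≤
          C * Real.exp (-ρ * omega) := by
  intro ℓ m
  refine ⟨exp (omega * (3 / 4)) * ∑' n, modeBound (ℓ + m) n, fun R hR ρ hρ v hv =>
    ⟨hv.sqrt_integral_sq_iterate_pd1_iterate_pd2_le hR ℓ m hρ, ?_⟩⟩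
  have hswap := hv.comp_swap.sqrt_integral_sq_iterate_pd1_iterate_pd2_le hR ℓ m hρ
  rw [iterate_pd2_comp_swap, iterate_pd1_comp_swap] at hswap
  exact hswap
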